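/- arXiv:2207.09972 — 2 statements merged into one kernel-verified Lean document; each statement's English description precedes it below -/
import Mathlib

section
/- Let k ≥ 3 and n ≥ 2, and let T be a k-gon whose k vertices lie among the vertices of the convex ((k−2)n+2)-gon, such that the k arcs of the polygon between cyclically consecutive vertices of T have lengths (k−2)i_1+1, …, (k−2)i_k+1 for natural numbers i_1, …, i_k (necessarily i_1+⋯+i_k = n−1). Then the set of k-angulations of the polygon containing T as one of their k-gons induces a subgraph of the flip graph K_{k,(k−2)n+2} isomorphic to the Cartesian product K_{k,(k−2)i_1+2} □ K_{k,(k−2)i_2+2} □ ⋯ □ K_{k,(k−2)i_k+2} of the flip graphs of the k sub-polygons cut off by the sides of T (where a flip graph over a 2-gon or k-gon with no k-angulation diagonals is a single vertex). -/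
open Finset

/-- `x` lies strictly between `a` and `b` in cyclic (counterclockwise) order
on the vertices `0, 1, …, m-1` of a convex `m`-gon. -/
def CycBtw {m : ℕ} (a b x : Fin m) : Prop :=
  0 < (x - a).val ∧ (x - a).val < (b - a).val

/-- `a` and `b` are adjacent (cyclically consecutive) vertices of the convex `m`-gon. -/
def PolyAdj {m : ℕ} (a b : Fin m) : Prop :=
  (b - a).val = 1 ∨ (a - b).val = 1

/-- `e` is a side of the convex `m`-gon. -/
def IsSide {m : ℕ} (e : Sym2 (Fin m)) : Prop :=
  ∃ a b : Fin m, e = s(a, b) ∧ PolyAdj a b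

/-- `e` is a diagonal of the convex `m`-gon: a pair of distinct non-adjacent vertices. -/
def IsDiagonal {m : ℕ} (e : Sym2 (Fin m)) : Prop :=
  ¬ e.IsDiag ∧ ∀ a b : Fin m, e = s(a, b) → ¬ PolyAdj a b

/-- Two chords cross iff exactly one endpoint of one lies strictly between the
endpoints of the other (for every representation of the endpoints). -/
def Crosses {m : ℕ} (e f : Sym2 (Fin m)) : Prop :=
  ∀ a b : Fin m, e = s(a, b) →
    ∃ c d : Fin m, f = s(c, d) ∧ Xor' (CycBtw a b c) (CycBtw a b d)

/-- `e` is an edge of the dissection given by the diagonal set `t`: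
a polygon side or a diagonal of `t`. -/
def EdgeOfD {m : ℕ} (t : Finset (Sym2 (Fin m))) (e : Sym2 (Fin m)) : Prop :=
  IsSide e ∨ e ∈ t

/-- `b` is the cyclic successor of `a` among the elements of `F`. -/
def NextIn {m : ℕ} (F : Finset (Fin m)) (a b : Fin m) : Prop :=
  a ∈ F ∧ b ∈ F ∧ a ≠ b ∧ ∀ x ∈ F, ¬ CycBtw a b x

/-- `F` is the vertex set of a cell (face) of the dissection of the convex `m`-gon by the
pairwise non-crossing diagonal set `t`: every pair of cyclically consecutive vertices of
`F` is joined by an edge of the dissection, and no diagonal of `t` joins two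
non-consecutive vertices of `F`. -/
def IsFaceSet {m : ℕ} (t : Finset (Sym2 (Fin m))) (F : Finset (Fin m)) : Prop :=
  3 ≤ F.card ∧
  (∀ a b : Fin m, NextIn F a b → EdgeOfD t s(a, b)) ∧
  (∀ e ∈ t, ∀ a b : Fin m, e = s(a, b) → a ∈ F → b ∈ F → NextIn F a b ∨ NextIn F b a)

/-- `t` is a `k`-angulation of the convex `((k-2)n+2)`-gon: a set of `n - 1` pairwise
non-crossing diagonals subdividing the polygon into cells that are all `k`-gons. -/
def IsKAngulation (k n : ℕ) (t : Finset (Sym2 (Fin ((k - 2) * n + 2)))) : Prop :=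
  (∀ e ∈ t, IsDiagonal e) ∧
  (∀ e ∈ t, ∀ f ∈ t, ¬ Crosses e f) ∧
  t.card = n - 1 ∧
  (∀ F : Finset (Fin ((k - 2) * n + 2)), IsFaceSet t F → F.card = k)

/-- The type of `k`-angulations of the convex `((k-2)n+2)`-gon. -/
def KAngulation (k n : ℕ) : Type :=
  {t : Finset (Sym2 (Fin ((k - 2) * n + 2))) // IsKAngulation k n t}

instance (k n : ℕ) : DecidableEq (KAngulation k n) := fun a b =>
  decidable_of_iff (a.val = b.val) Subtype.ext_iff.symm

noncomputable instance (k n : ℕ) : Fintype (KAngulation k n) := by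
  classical exact Subtype.fintype _

/-- The `k`-angulation flip graph `K_{k,(k-2)n+2}`: vertices are the `k`-angulations of
the convex `((k-2)n+2)`-gon, two of them adjacent iff they differ in exactly one
diagonal (a flip). -/
def kAngGraph (k n : ℕ) : SimpleGraph (KAngulation k n) where
  Adj s t := (s.val \ t.val).card = 1 ∧ (t.val \ s.val).card = 1
  symm := ⟨fun s t h => ⟨h.2, h.1⟩⟩
  loopless := ⟨fun s h => by simp at h⟩

/-- The Cartesian (box) product of a finite family of graphs: two tuples are adjacent
iff they agree in all but one coordinate, in which they are adjacent. For an indexed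
family this agrees (up to the obvious isomorphism) with the associatively iterated
binary box product `G_1 □ ⋯ □ G_k`. -/
def piBoxProd {ι : Type*} {V : ι → Type*} (G : ∀ i, SimpleGraph (V i)) :
    SimpleGraph (∀ i, V i) where
  Adj x y := ∃ i, (G i).Adj (x i) (y i) ∧ ∀ j, j ≠ i → x j = y j
  symm := by
    constructor
    rintro x y ⟨i, ha, he⟩
    exact ⟨i, ha.symm, fun j hj => (he j hj).symm⟩
  loopless := by
    constructor
    rintro x ⟨i, ha, -⟩
    exact (G i).loopless.irrefl _ ha


/-- Value of a difference in `Fin m`. -/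
lemma kg_sub_val {m : ℕ} (a b : Fin m) :
    (a - b).val = if b.val ≤ a.val then a.val - b.val else m + a.val - b.val := by
  have ha := a.isLt
  have hb := b.isLt
  rw [Fin.sub_def]
  simp only
  split_ifs with h
  · rw [show m - b.val + a.val = (a.val - b.val) + m by omega, Nat.add_mod_right,
      Nat.mod_eq_of_lt (by omega)]
  · rw [Nat.mod_eq_of_lt (by omega)]; omega

lemma kg_inj {m : ℕ} (o a b : Fin m) (h : (a - o).val = (b - o).val) : a = b := by
  have ha := a.isLt
  have hb := b.isLt
  have ho := o.isLt
  rw [kg_sub_val, kg_sub_val] at h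
  apply Fin.ext
  split_ifs at h <;> omega

lemma kg_eq_iff {m : ℕ} (o a b : Fin m) : a = b ↔ (a - o).val = (b - o).val :=
  ⟨fun h => by rw [h], kg_inj o a b⟩

/-- Cyclic betweenness in coordinates centred at `o`. -/
lemma kg_btw {m : ℕ} (o a b x : Fin m) : CycBtw a b x ↔
    ((a - o).val < (x - o).val ∧ (x - o).val < (b - o).val) ∨
    ((x - o).val < (b - o).val ∧ (b - o).val < (a - o).val) ∨
    ((b - o).val < (a - o).val ∧ (a - o).val < (x - o).val) := by
  have ha := a.isLt
  have hb := b.isLt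
  have ho := o.isLt
  have hx := x.isLt
  unfold CycBtw
  simp only [kg_sub_val]
  split_ifs <;> omega

/-- Cyclic betweenness in the standard coordinates. -/
lemma kg_btw0 {m : ℕ} (a b x : Fin m) : CycBtw a b x ↔
    (a.val < x.val ∧ x.val < b.val) ∨
    (x.val < b.val ∧ b.val < a.val) ∨
    (b.val < a.val ∧ a.val < x.val) := by
  have ha := a.isLt
  have hb := b.isLt
  have hx := x.isLt
  unfold CycBtw
  simp only [kg_sub_val]
  split_ifs <;> omega

lemma kg_adj {m : ℕ} (hm : 2 ≤ m) (o a b : Fin m) : (b - a).val = 1 ↔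
    (b - o).val = (a - o).val + 1 ∨ ((b - o).val = 0 ∧ (a - o).val + 1 = m) := by
  have ha := a.isLt
  have hb := b.isLt
  have ho := o.isLt
  simp only [kg_sub_val]
  split_ifs <;> omega

lemma kg_adj0 {m : ℕ} (hm : 2 ≤ m) (a b : Fin m) : (b - a).val = 1 ↔
    b.val = a.val + 1 ∨ (b.val = 0 ∧ a.val + 1 = m) := by
  have ha := a.isLt
  have hb := b.isLt
  simp only [kg_sub_val]
  split_ifs <;> omega

lemma kg_polyAdj_symm {m : ℕ} (a b : Fin m) : PolyAdj a b ↔ PolyAdj b a := by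
  unfold PolyAdj; tauto

lemma kg_isSide {m : ℕ} (a b : Fin m) : IsSide s(a, b) ↔ PolyAdj a b := by
  constructor
  · rintro ⟨c, d, h, hp⟩
    rcases Sym2.eq_iff.1 h with ⟨rfl, rfl⟩ | ⟨rfl, rfl⟩
    · exact hp
    · exact (kg_polyAdj_symm _ _).1 hp
  · exact fun h => ⟨a, b, rfl, h⟩

lemma kg_isDiagonal {m : ℕ} (a b : Fin m) : IsDiagonal s(a, b) ↔ a ≠ b ∧ ¬ PolyAdj a b := by
  constructor
  · rintro ⟨h, hp⟩
    exact ⟨by simpa using h, hp a b rfl⟩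
  · rintro ⟨h, hp⟩
    refine ⟨by simpa using h, fun c d hcd => ?_⟩
    rcases Sym2.eq_iff.1 hcd with ⟨rfl, rfl⟩ | ⟨rfl, rfl⟩
    · exact hp
    · exact fun h => hp ((kg_polyAdj_symm _ _).1 h)

lemma kg_crosses {m : ℕ} (a b c d : Fin m) : Crosses s(a, b) s(c, d) ↔
    Xor' (CycBtw a b c) (CycBtw a b d) ∧ Xor' (CycBtw b a c) (CycBtw b a d) := by
  have key : ∀ x y : Fin m, (∃ c' d' : Fin m, s(c, d) = s(c', d') ∧
      Xor' (CycBtw x y c') (CycBtw x y d')) ↔ Xor' (CycBtw x y c) (CycBtw x y d) := by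
    intro x y
    constructor
    · rintro ⟨c', d', h, hx⟩
      rcases Sym2.eq_iff.1 h with ⟨rfl, rfl⟩ | ⟨rfl, rfl⟩
      · exact hx
      · exact (_root_.xor_comm _ _).mp hx
    · exact fun h => ⟨c, d, rfl, h⟩
  unfold Crosses
  simp only [key]
  constructor
  · intro h
    exact ⟨h a b rfl, h b a Sym2.eq_swap⟩
  · rintro ⟨h1, h2⟩ x y hxy
    rcases Sym2.eq_iff.1 hxy with ⟨rfl, rfl⟩ | ⟨rfl, rfl⟩
    · exact h1
    · exact h2

/-- Every element of a set with another element has a successor. -/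
lemma kg_exists_next {m : ℕ} (F : Finset (Fin m)) (a : Fin m) (ha : a ∈ F)
    (h2 : ∃ c ∈ F, c ≠ a) : ∃ b, NextIn F a b := by
  classical
  have hne : (F.erase a).Nonempty := by
    obtain ⟨c, hc, hca⟩ := h2
    exact ⟨c, by simp [hc, hca]⟩
  obtain ⟨b, hb, hmin⟩ := Finset.exists_min_image (F.erase a) (fun x => (x - a).val) hne
  simp only [Finset.mem_erase] at hb hmin
  refine ⟨b, ha, hb.2, fun h => hb.1 h.symm, fun x hx hbt => ?_⟩
  have h1 := hbt.1
  have h2 := hbt.2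
  have : x ≠ a := by
    rintro rfl
    simp [kg_sub_val] at h1
  have := hmin x ⟨this, hx⟩
  omega

/-- Every element of a set with another element has a predecessor. -/
lemma kg_exists_prev {m : ℕ} (F : Finset (Fin m)) (b : Fin m) (hb : b ∈ F)
    (h2 : ∃ c ∈ F, c ≠ b) : ∃ a, NextIn F a b := by
  classical
  have hne : (F.erase b).Nonempty := by
    obtain ⟨c, hc, hca⟩ := h2
    exact ⟨c, by simp [hc, hca]⟩
  obtain ⟨a, ha, hmin⟩ := Finset.exists_max_image (F.erase b) (fun x => (x - b).val) hne
  simp only [Finset.mem_erase] at ha hmin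
  refine ⟨a, ha.2, hb, ha.1, fun x hx hbt => ?_⟩
  rw [kg_btw b] at hbt
  have h0 : (b - b).val = 0 := by simp [kg_sub_val]
  have : x ≠ b := by
    rintro rfl
    omega
  have := hmin x ⟨this, hx⟩
  omega

/-- Faces of a dissection of the convex polygon with vertex set `V`. -/
def KgVFace {m : ℕ} (t : Finset (Sym2 (Fin m))) (V F : Finset (Fin m)) : Prop :=
  F ⊆ V ∧ 3 ≤ F.card ∧
  (∀ a b : Fin m, NextIn F a b → NextIn V a b ∨ s(a, b) ∈ t) ∧
  (∀ a b : Fin m, s(a, b) ∈ t → a ∈ F → b ∈ F → NextIn F a b ∨ NextIn F b a)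

lemma kg_euler {m k : ℕ} (hk : 3 ≤ k) : ∀ (d : ℕ) (t : Finset (Sym2 (Fin m)))
    (V : Finset (Fin m)), t.card = d → 3 ≤ V.card →
    (∀ a b : Fin m, s(a, b) ∈ t → a ∈ V ∧ b ∈ V ∧ a ≠ b ∧ ¬ NextIn V a b) →
    (∀ e ∈ t, ∀ f ∈ t, ¬ Crosses e f) →
    (∀ F, KgVFace t V F → F.card = k) → V.card = (k - 2) * (d + 1) + 2 := by
  classical
  intro d
  induction d with
  | zero =>
    intro t V ht hV _ _ hF
    have ht : t = ∅ := Finset.card_eq_zero.1 ht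
    subst ht
    have := hF V ⟨subset_rfl, hV, fun a b h => Or.inl h, by simp⟩
    omega
  | succ d ih =>
    intro t V ht hV hch hnc hF
    have hne : (Finset.univ.filter (fun q : Fin m × Fin m => s(q.1, q.2) ∈ t)).Nonempty := by
      have : t.Nonempty := by rw [← Finset.card_pos]; omega
      obtain ⟨e, he⟩ := this
      induction e using Sym2.ind with
      | _ a b => exact ⟨(a, b), by simp [he]⟩
    obtain ⟨⟨a, b⟩, hab, hmin⟩ := Finset.exists_min_image _
      (fun q : Fin m × Fin m => (V.filter (fun x => CycBtw q.1 q.2 x)).card) hne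
    simp only [Finset.mem_filter, Finset.mem_univ, true_and, Prod.forall] at hab hmin
    obtain ⟨haV, hbV, hne_ab, hnab⟩ := hch a b hab
    have hba : s(b, a) ∈ t := by rw [Sym2.eq_swap]; exact hab
    have hnba := (hch b a hba).2.2.2
    have hne_val : a.val ≠ b.val := fun h => hne_ab (Fin.ext h)
    -- no chord strictly inside the ear
    have strict : ∀ c d : Fin m, s(c, d) ∈ t → (∀ x, CycBtw c d x → CycBtw a b x) →
        ∀ y ∈ V, CycBtw a b y → ¬ CycBtw c d y → False := by
      intro c d hcd hsub y hyV hy hny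
      have h1 := hmin c d hcd
      have h2 : (V.filter (fun x => CycBtw c d x)).card
          < (V.filter (fun x => CycBtw a b x)).card := by
        apply Finset.card_lt_card
        rw [Finset.ssubset_iff_of_subset]
        · exact ⟨y, by simp [hyV, hy], by simp [hny]⟩
        · intro x
          simp only [Finset.mem_filter]
          exact fun h => ⟨h.1, hsub x h.2⟩
      omega
    have inside : ∀ c d : Fin m, s(c, d) ∈ t → (c = a ∨ c = b ∨ CycBtw a b c) →
        (d = a ∨ d = b ∨ CycBtw a b d) → (c = a ∧ d = b) ∨ (c = b ∧ d = a) := by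
      intro c d hcd hc hd
      obtain ⟨hcV, hdV, hcdne, -⟩ := hch c d hcd
      have hdc : s(d, c) ∈ t := by rw [Sym2.eq_swap]; exact hcd
      have main : ∀ c d : Fin m, s(c, d) ∈ t → c ∈ V → d ∈ V → 
          (c = a ∨ c = b ∨ CycBtw a b c) →
          (d = a ∨ d = b ∨ CycBtw a b d) → (CycBtw a b c ∨ CycBtw a b d) →
          (c - a).val < (d - a).val → False := by
        intro c d hcd hcV hdV hc hd hor hlt
        have h0 : (a - a).val = 0 := by simp [kg_sub_val]
        have hsub : ∀ x, CycBtw c d x → CycBtw a b x := by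
          intro x
          simp only [kg_btw a, kg_eq_iff a] at hc hd hor hne_ab ⊢
          omega
        rcases hor with h | h
        · refine strict c d hcd hsub c hcV h ?_
          rw [kg_btw a]; omega
        · refine strict c d hcd hsub d hdV h ?_
          rw [kg_btw a]; omega
      by_cases hor : CycBtw a b c ∨ CycBtw a b d
      · exfalso
        rcases lt_trichotomy (c - a).val (d - a).val with h | h | h
        · exact main c d hcd hcV hdV hc hd hor h
        · exact hcdne (kg_inj _ _ _ h)
        · exact main d c hdc hdV hcV hd hc hor.symm h
      · push Not at hor
        rcases hc with rfl | rfl | hc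
        · rcases hd with rfl | rfl | hd
          · exact absurd rfl hcdne
          · exact Or.inl ⟨rfl, rfl⟩
          · exact absurd hd hor.2
        · rcases hd with rfl | rfl | hd
          · exact Or.inr ⟨rfl, rfl⟩
          · exact absurd rfl hcdne
          · exact absurd hd hor.2
        · exact absurd hc hor.1
    have hEar : (V.filter (fun x => x = a ∨ x = b ∨ CycBtw a b x)).card = k := by
      apply hF
      have hnext : NextIn (V.filter (fun x => x = a ∨ x = b ∨ CycBtw a b x)) b a := by
        refine ⟨by simp [hbV], by simp [haV], hne_ab.symm, ?_⟩
        intro x hx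
        simp only [Finset.mem_filter, kg_btw0, Fin.ext_iff] at hx ⊢
        omega
      refine ⟨Finset.filter_subset _ _, ?_, ?_, ?_⟩
      · have : ∃ x ∈ V, CycBtw a b x := by
          by_contra hcon
          push Not at hcon
          exact hnab ⟨haV, hbV, hne_ab, hcon⟩
        obtain ⟨x, hxV, hx⟩ := this
        have h3 : ({a, b, x} : Finset (Fin m)).card = 3 := by
          apply Finset.card_eq_three.2
          refine ⟨a, b, x, hne_ab, ?_, ?_, rfl⟩ <;> rintro rfl <;>
            rw [kg_btw0] at hx <;> omega
        rw [← h3]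
        apply Finset.card_le_card
        intro y
        simp only [Finset.mem_insert, Finset.mem_singleton, Finset.mem_filter]
        rintro (rfl | rfl | rfl) <;> simp [*]
      · intro c d ⟨hc, hd, hcd, hn⟩
        simp only [Finset.mem_filter] at hc hd hn
        by_cases h : c = b ∧ d = a
        · right; rw [h.1, h.2]; exact hba
        · left
          refine ⟨hc.1, hd.1, hcd, fun x hx hbt => ?_⟩
          refine hn x ⟨hx, ?_⟩ hbt
          have hc2 := hc.2
          have hd2 := hd.2
          have n1 := hn a
          have n2 := hn b
          simp only [haV, hbV, true_or, or_true, and_self, true_implies] at n1 n2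
          simp only [kg_btw0, Fin.ext_iff] at hc2 hd2 n1 n2 h hbt ⊢
          omega
      · intro c d hcd hc hd
        simp only [Finset.mem_filter] at hc hd
        rcases inside c d hcd hc.2 hd.2 with ⟨rfl, rfl⟩ | ⟨rfl, rfl⟩
        · exact Or.inr hnext
        · exact Or.inl hnext
    have haV' : a ∈ V.filter (fun x => ¬ CycBtw a b x) := by
      simp only [Finset.mem_filter, kg_btw0]; exact ⟨haV, by omega⟩
    have hbV' : b ∈ V.filter (fun x => ¬ CycBtw a b x) := by
      simp only [Finset.mem_filter, kg_btw0]; exact ⟨hbV, by omega⟩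
    have hcard1 : (V.filter (fun x => CycBtw a b x)).card + 2 = k := by
      rw [← hEar]
      have : V.filter (fun x => x = a ∨ x = b ∨ CycBtw a b x)
          = insert a (insert b (V.filter (fun x => CycBtw a b x))) := by
        ext x
        simp only [Finset.mem_filter, Finset.mem_insert]
        constructor
        · tauto
        · rintro (rfl | rfl | h)
          · simp [haV]
          · simp [hbV]
          · simp [h]
      rw [this, Finset.card_insert_of_notMem, Finset.card_insert_of_notMem]
      · simp only [Finset.mem_filter, kg_btw0]; omega
      · simp only [Finset.mem_insert, Finset.mem_filter, kg_btw0, Fin.ext_iff]; omega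
    have hcard2 := Finset.card_filter_add_card_filter_not (s := V) (fun x => CycBtw a b x)
    have hV' : (V.filter (fun x => ¬ CycBtw a b x)).card = (k - 2) * (d + 1) + 2 := by
      apply ih (t.erase s(a, b))
      · rw [Finset.card_erase_of_mem hab]; omega
      · have : ∃ x ∈ V, CycBtw b a x := by
          by_contra hcon
          push Not at hcon
          exact hnba ⟨hbV, haV, hne_ab.symm, hcon⟩
        obtain ⟨x, hxV, hx⟩ := this
        have h3 : ({a, b, x} : Finset (Fin m)).card = 3 := by
          apply Finset.card_eq_three.2
          refine ⟨a, b, x, hne_ab, ?_, ?_, rfl⟩ <;> rintro rfl <;>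
            rw [kg_btw0] at hx <;> omega
        rw [← h3]
        apply Finset.card_le_card
        intro y
        simp only [Finset.mem_insert, Finset.mem_singleton]
        rintro (rfl | rfl | rfl)
        · exact haV'
        · exact hbV'
        · simp only [Finset.mem_filter, hxV, true_and]
          rw [kg_btw0] at hx ⊢
          omega
      · intro c d hcd
        rw [Finset.mem_erase] at hcd
        obtain ⟨hcdne, hcd⟩ := hcd
        obtain ⟨hcV, hdV, hne, hnx⟩ := hch c d hcd
        have hno : ¬ ((c = a ∧ d = b) ∨ (c = b ∧ d = a)) := by
          intro h
          exact hcdne (Sym2.eq_iff.2 h)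
        have hin : ¬ ((c = a ∨ c = b ∨ CycBtw a b c) ∧ (d = a ∨ d = b ∨ CycBtw a b d)) :=
          fun h => hno (inside c d hcd h.1 h.2)
        have hncr := hnc _ hab _ hcd
        rw [kg_crosses] at hncr
        unfold Xor' Xor at hncr
        have hc : ¬ CycBtw a b c := by
          simp only [kg_btw0, Fin.ext_iff] at hin hncr ⊢
          omega
        have hd : ¬ CycBtw a b d := by
          simp only [kg_btw0, Fin.ext_iff] at hin hncr ⊢
          omega
        refine ⟨by simp [hcV, hc], by simp [hdV, hd], hne, ?_⟩
        rintro ⟨-, -, -, hnn⟩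
        refine hnx ⟨hcV, hdV, hne, fun x hx hbt => ?_⟩
        have n1 := hnn a haV'
        have n2 := hnn b hbV'
        have n3 : CycBtw a b x := by
          by_contra hh
          exact hnn x (by simp [hx, hh]) hbt
        simp only [kg_btw0, Fin.ext_iff] at n1 n2 n3 hbt hc hd hno
        omega
      · intro e he f hf
        exact hnc e (Finset.mem_of_mem_erase he) f (Finset.mem_of_mem_erase hf)
      · intro F hFF
        apply hF
        obtain ⟨hsub, h3, hE, hD⟩ := hFF
        have hnot : ∀ x ∈ F, ¬ CycBtw a b x := fun x hx => (Finset.mem_filter.1 (hsub hx)).2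
        refine ⟨hsub.trans (Finset.filter_subset _ _), h3, ?_, ?_⟩
        · intro c d hcd
          by_cases heq : c = a ∧ d = b
          · right; rw [heq.1, heq.2]; exact hab
          rcases hE c d hcd with h | h
          · left
            obtain ⟨hc, hd, hne, hnn⟩ := h
            rw [Finset.mem_filter] at hc hd
            refine ⟨hc.1, hd.1, hne, fun x hx hbt => ?_⟩
            have n1 := hnn a haV'
            have n2 := hnn b hbV'
            have n3 : CycBtw a b x := by
              by_contra hh
              exact hnn x (by simp [hx, hh]) hbt
            have hc := hc.2
            have hd := hd.2
            simp only [kg_btw0, Fin.ext_iff] at n1 n2 n3 hbt hc hd heq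
            omega
          · right; exact Finset.mem_of_mem_erase h
        · intro c d hcd hc hd
          by_cases heq : s(c, d) = s(a, b)
          · rcases Sym2.eq_iff.1 heq with ⟨rfl, rfl⟩ | ⟨rfl, rfl⟩
            · exact Or.inl ⟨hc, hd, hne_ab, hnot⟩
            · exact Or.inr ⟨hd, hc, hne_ab, hnot⟩
          · exact hD c d (Finset.mem_erase.2 ⟨heq, hcd⟩) hc hd
    have : (k - 2) * (d + 1 + 1) = (k - 2) * (d + 1) + (k - 2) := by ring
    omega

lemma kg_next_univ {m : ℕ} (hm : 2 ≤ m) (a b : Fin m) :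
    NextIn Finset.univ a b ↔ (b - a).val = 1 := by
  constructor
  · rintro ⟨-, -, hne, hx⟩
    have ha := a.isLt
    have hb := b.isLt
    have hne : a.val ≠ b.val := fun h => hne (Fin.ext h)
    rw [kg_adj0 hm]
    by_cases h : a.val + 1 < m
    · have := hx ⟨a.val + 1, h⟩ (Finset.mem_univ _)
      rw [kg_btw0] at this
      simp only at this
      omega
    · have := hx ⟨0, by omega⟩ (Finset.mem_univ _)
      rw [kg_btw0] at this
      simp only at this
      omega
  · intro h
    refine ⟨Finset.mem_univ _, Finset.mem_univ _, ?_, ?_⟩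
    · rintro rfl
      simp [kg_sub_val] at h
    · intro x _ hx
      have h1 := hx.1
      have h2 := hx.2
      omega

/-- Euler count for a dissection all of whose faces are `k`-gons. -/
lemma kg_euler_univ {m k : ℕ} (hk : 3 ≤ k) (hm : 3 ≤ m) (t : Finset (Sym2 (Fin m)))
    (hd : ∀ e ∈ t, IsDiagonal e) (hnc : ∀ e ∈ t, ∀ f ∈ t, ¬ Crosses e f)
    (hF : ∀ F, IsFaceSet t F → F.card = k) : m = (k - 2) * (t.card + 1) + 2 := by
  have := kg_euler hk t.card t Finset.univ rfl (by simpa using hm) ?_ hnc ?_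
  · simpa using this
  · intro a b hab
    have := (kg_isDiagonal a b).1 (hd _ hab)
    refine ⟨Finset.mem_univ _, Finset.mem_univ _, this.1, ?_⟩
    rw [kg_next_univ (by omega)]
    exact fun h => this.2 (Or.inl h)
  · rintro F ⟨-, h3, hE, hD⟩
    apply hF
    refine ⟨h3, fun a b h => ?_, ?_⟩
    · rcases hE a b h with h | h
      · rw [kg_next_univ (by omega)] at h
        exact Or.inl ((kg_isSide _ _).2 (Or.inl h))
      · exact Or.inr h
    · rintro e he a b rfl
      exact hD a b he

/-- The combinatorial data of a polygon `v` inscribed in the convex `m`-gon, together with the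
inclusions `φ j` of the cut-off sub-polygons. -/
structure KgArcs {k m : ℕ} (v : Fin k → Fin m) (p : Fin k → ℕ) (nx : Fin k → Fin k)
    (φ : ∀ j, Fin (p j) → Fin m) : Prop where
  hφ : ∀ j x, (φ j x - v j).val = x.val
  hp2 : ∀ j, 2 ≤ p j
  hpm : ∀ j, p j < m
  arc : ∀ j, (v (nx j) - v j).val + 1 = p j
  cov : ∀ x, ∃ j, (x - v j).val + 1 < p j
  uni : ∀ x j l, (x - v j).val + 1 < p j → (x - v l).val + 1 < p l → j = l
  nx2 : ∀ j, nx (nx j) ≠ j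
  orb : ∀ P : Fin k → Prop, (∃ j, P j) → (∀ j, P j → P (nx j)) → ∀ j, P j

lemma kg_self {m : ℕ} (a : Fin m) : (a - a).val = 0 := by simp [kg_sub_val]

lemma kg_zero {m : ℕ} (a b : Fin m) (h : (a - b).val = 0) : a = b := by
  apply kg_inj b; rw [h, kg_self]

section arcs

variable {k m : ℕ} {v : Fin k → Fin m} {p : Fin k → ℕ} {nx : Fin k → Fin k}
  {φ : ∀ j, Fin (p j) → Fin m}

lemma KgArcs.phi_inj (A : KgArcs v p nx φ) (j : Fin k) : Function.Injective (φ j) := by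
  intro x y h
  apply Fin.ext
  rw [← A.hφ j x, ← A.hφ j y, h]

lemma KgArcs.range (A : KgArcs v p nx φ) (j : Fin k) (x : Fin m) (h : (x - v j).val < p j) :
    ∃ y, φ j y = x :=
  ⟨⟨_, h⟩, kg_inj (v j) _ _ (by rw [A.hφ])⟩

lemma KgArcs.lt (A : KgArcs v p nx φ) (j : Fin k) (y : Fin (p j)) :
    (φ j y - v j).val < p j := by
  rw [A.hφ]; exact y.isLt

lemma KgArcs.v_inj (A : KgArcs v p nx φ) : Function.Injective v := by
  intro j l h
  apply A.uni (v j)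
  · rw [kg_self]; exact A.hp2 j
  · rw [h, kg_self]; exact A.hp2 l

/-- No vertex of `v` is in the interior of an arc. -/
lemma KgArcs.not_int (A : KgArcs v p nx φ) (j l : Fin k) (h : (v l - v j).val + 1 < p j) :
    l = j := by
  apply A.uni (v l) l j _ h
  rw [kg_self]; exact A.hp2 l

/-- A vertex of `v` in the closed arc `j` is one of the two ends. -/
lemma KgArcs.ends (A : KgArcs v p nx φ) (j l : Fin k) (h : (v l - v j).val < p j) :
    l = j ∨ l = nx j := by
  by_cases h1 : (v l - v j).val + 1 < p j
  · exact Or.inl (A.not_int j l h1)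
  · right
    apply A.v_inj
    apply kg_inj (v j)
    have := A.arc j
    omega

/-- A vertex in the interior of an arc is in no other closed arc. -/
lemma KgArcs.int_uni (A : KgArcs v p nx φ) (x : Fin m) (j l : Fin k)
    (h0 : 0 < (x - v j).val) (h1 : (x - v j).val + 1 < p j) (h2 : (x - v l).val < p l) :
    l = j := by
  by_cases h3 : (x - v l).val + 1 < p l
  · exact A.uni x l j h3 h1
  · exfalso
    have : x = v (nx l) := by
      apply kg_inj (v l)
      have := A.arc l
      omega
    subst this
    have := A.not_int j _ h1
    rw [this, kg_self] at h0
    omega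

lemma KgArcs.nx_ne (A : KgArcs v p nx φ) (j : Fin k) : nx j ≠ j := by
  intro h
  exact A.nx2 j (by rw [h, h])

/-- Two distinct vertices lie in at most one common closed arc. -/
lemma KgArcs.pair_uni (A : KgArcs v p nx φ) (x y : Fin m) (hxy : x ≠ y) (j l : Fin k)
    (hxj : (x - v j).val < p j) (hyj : (y - v j).val < p j)
    (hxl : (x - v l).val < p l) (hyl : (y - v l).val < p l) : j = l := by
  have key : ∀ x : Fin m, (x - v j).val < p j → (x - v l).val < p l → j = l ∨ x = v j ∨
      x = v (nx j) := by
    intro x hxj hxl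
    by_cases h0 : (x - v j).val = 0
    · exact Or.inr (Or.inl (kg_zero _ _ h0))
    by_cases h1 : (x - v j).val + 1 < p j
    · exact Or.inl (A.int_uni x j l (by omega) h1 hxl).symm
    · refine Or.inr (Or.inr (kg_inj (v j) _ _ ?_))
      have := A.arc j
      omega
  have fin : (v j - v l).val < p l → (v (nx j) - v l).val < p l → j = l := by
    intro h1 h2
    rcases A.ends l j h1 with h | h
    · exact h
    · rcases A.ends l (nx j) h2 with h' | h'
      · exact absurd (h' ▸ h : j = nx (nx j)).symm (A.nx2 j)
      · exact absurd (h'.trans h.symm) (A.nx_ne j)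
  rcases key x hxj hxl with h | rfl | rfl
  · exact h
  · rcases key y hyj hyl with h | rfl | rfl
    · exact h
    · exact absurd rfl hxy
    · exact fin hxl hyl
  · rcases key y hyj hyl with h | rfl | rfl
    · exact h
    · exact fin hyl hxl
    · exact absurd rfl hxy

lemma KgArcs.btw (A : KgArcs v p nx φ) (j : Fin k) (a b x : Fin (p j)) :
    CycBtw (φ j a) (φ j b) (φ j x) ↔ CycBtw a b x := by
  rw [kg_btw (v j), kg_btw0, A.hφ, A.hφ, A.hφ]

lemma KgArcs.crosses (A : KgArcs v p nx φ) (j : Fin k) (a b c d : Fin (p j)) :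
    Crosses s(φ j a, φ j b) s(φ j c, φ j d) ↔ Crosses s(a, b) s(c, d) := by
  simp only [kg_crosses, A.btw]

lemma KgArcs.polyAdj (A : KgArcs v p nx φ) (j : Fin k) (a b : Fin (p j))
    (h : PolyAdj (φ j a) (φ j b)) : PolyAdj a b := by
  unfold PolyAdj at h ⊢
  have h1 := A.hp2 j
  have h2 := A.hpm j
  have ha := a.isLt
  have hb := b.isLt
  rw [kg_adj (by omega) (v j), kg_adj (by omega) (v j), A.hφ, A.hφ] at h
  rw [kg_adj0 (by omega), kg_adj0 (by omega)]
  omega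

lemma KgArcs.isDiagonal (A : KgArcs v p nx φ) (j : Fin k) (a b : Fin (p j))
    (h : IsDiagonal s(a, b)) : IsDiagonal s(φ j a, φ j b) := by
  rw [kg_isDiagonal] at h ⊢
  exact ⟨fun hh => h.1 (A.phi_inj j hh), fun hh => h.2 (A.polyAdj j a b hh)⟩

/-- Sides of a subpolygon: sides of the polygon, or the side of `v`. -/
lemma KgArcs.polyAdj_cases (A : KgArcs v p nx φ) (j : Fin k) (a b : Fin (p j))
    (h : PolyAdj a b) : PolyAdj (φ j a) (φ j b) ∨ s(φ j a, φ j b) = s(v j, v (nx j)) := by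
  have h1 := A.hp2 j
  have h2 := A.hpm j
  have h3 := A.arc j
  have ha := a.isLt
  have hb := b.isLt
  have h0 := kg_self (v j)
  rw [Sym2.eq_iff]
  unfold PolyAdj at h ⊢
  simp only [kg_eq_iff (v j)]
  rw [kg_adj (by omega) (v j), kg_adj (by omega) (v j)]
  simp only [A.hφ]
  rw [kg_adj0 (by omega), kg_adj0 (by omega)] at h
  omega

lemma KgArcs.image_next (A : KgArcs v p nx φ) (j : Fin k) (F : Finset (Fin (p j)))
    (a b : Fin (p j)) : NextIn (F.image (φ j)) (φ j a) (φ j b) ↔ NextIn F a b := by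
  have hi := A.phi_inj j
  unfold NextIn
  simp only [Finset.mem_image, hi.eq_iff, exists_eq_right, ne_eq, forall_exists_index, and_imp,
    forall_apply_eq_imp_iff₂, A.btw]

/-- A dissection compatible with the polygon `v`. -/
structure KgGood (v : Fin k → Fin m) (p : Fin k → ℕ) (nx : Fin k → Fin k)
    (φ : ∀ j, Fin (p j) → Fin m) (t : Finset (Sym2 (Fin m))) : Prop where
  diag : ∀ e ∈ t, IsDiagonal e
  loc : ∀ e ∈ t, ∃ j a b, e = s(φ j a, φ j b)
  side : ∀ j, EdgeOfD t s(v j, v (nx j))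

open Classical in
/-- Restriction of a dissection to a subpolygon. -/
noncomputable def kgFwd (p : Fin k → ℕ)
    (φ : ∀ j, Fin (p j) → Fin m) (t : Finset (Sym2 (Fin m))) (j : Fin k) :
    Finset (Sym2 (Fin (p j))) :=
  Finset.univ.filter (fun e => IsDiagonal e ∧ e.map (φ j) ∈ t)

lemma kgFwd_mem (t : Finset (Sym2 (Fin m))) (j : Fin k) (a b : Fin (p j)) :
    s(a, b) ∈ kgFwd p φ t j ↔ IsDiagonal s(a, b) ∧ s(φ j a, φ j b) ∈ t := by
  simp [kgFwd]

open Classical in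
/-- Gluing dissections of the subpolygons. -/
noncomputable def kgBwd (p : Fin k → ℕ)
    (φ : ∀ j, Fin (p j) → Fin m) (s : ∀ j, Finset (Sym2 (Fin (p j)))) :
    Finset (Sym2 (Fin m)) :=
  Finset.univ.filter (fun e => IsDiagonal e ∧ ∃ j a b, e = s(φ j a, φ j b) ∧
    (s(a, b) ∈ s j ∨ PolyAdj a b))

lemma kgBwd_mem (s : ∀ j, Finset (Sym2 (Fin (p j)))) (e : Sym2 (Fin m)) :
    e ∈ kgBwd p φ s ↔ IsDiagonal e ∧ ∃ j a b, e = s(φ j a, φ j b) ∧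
    (s(a, b) ∈ s j ∨ PolyAdj a b) := by
  simp [kgBwd]

/-- Two chords of subpolygons coincide only for trivial reasons. -/
lemma KgArcs.chord_uni (A : KgArcs v p nx φ) (j l : Fin k) (a b : Fin (p j)) (c d : Fin (p l))
    (hab : a ≠ b) (h : s(φ j a, φ j b) = s(φ l c, φ l d)) : j = l := by
  have hne : φ j a ≠ φ j b := fun h => hab (A.phi_inj j h)
  apply A.pair_uni _ _ hne j l (A.lt j a) (A.lt j b)
  · rcases Sym2.eq_iff.1 h with h | h
    · rw [h.1]; exact A.lt l c
    · rw [h.1]; exact A.lt l d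
  · rcases Sym2.eq_iff.1 h with h | h
    · rw [h.2]; exact A.lt l d
    · rw [h.2]; exact A.lt l c

lemma KgArcs.fwd_bwd (A : KgArcs v p nx φ) (s : ∀ j, Finset (Sym2 (Fin (p j))))
    (hs : ∀ j, ∀ e ∈ s j, IsDiagonal e) (j : Fin k) : kgFwd p φ (kgBwd p φ s) j = s j := by
  ext e
  induction e using Sym2.ind with
  | _ a b =>
    rw [kgFwd_mem, kgBwd_mem]
    constructor
    · rintro ⟨hd, -, l, c, d, h, h2⟩
      have hab := ((kg_isDiagonal _ _).1 hd)
      have := A.chord_uni j l a b c d hab.1 h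
      subst this
      have heq : s(a, b) = s(c, d) := by
        apply Sym2.map.injective (A.phi_inj j)
        simpa using h
      rw [heq]
      rcases h2 with h2 | h2
      · exact h2
      · rw [heq, kg_isDiagonal] at hd
        exact absurd h2 hd.2
    · intro h
      have hd := hs j _ h
      exact ⟨hd, A.isDiagonal j a b hd, j, a, b, rfl, Or.inl h⟩

lemma KgArcs.side_eq (A : KgArcs v p nx φ) (j : Fin k) :
    ∃ a b : Fin (p j), φ j a = v j ∧ φ j b = v (nx j) ∧ PolyAdj a b := by
  have h1 := A.hp2 j
  have h3 := A.arc j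
  refine ⟨⟨0, by omega⟩, ⟨p j - 1, by omega⟩, ?_, ?_, ?_⟩
  · apply kg_inj (v j); rw [A.hφ, kg_self]
  · apply kg_inj (v j); rw [A.hφ]; simp only; omega
  · right
    rw [kg_adj0 h1]
    right
    exact ⟨rfl, Nat.sub_add_cancel (by omega)⟩

lemma KgArcs.v_ne (A : KgArcs v p nx φ) (j : Fin k) : v j ≠ v (nx j) :=
  fun h => A.nx_ne j (A.v_inj h).symm

lemma KgArcs.edge_or (t : Finset (Sym2 (Fin m))) (a b : Fin m) (hab : a ≠ b)
    (h : IsDiagonal s(a, b) → s(a, b) ∈ t) : EdgeOfD t s(a, b) := by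
  by_cases hp : PolyAdj a b
  · exact Or.inl ((kg_isSide _ _).2 hp)
  · exact Or.inr (h ((kg_isDiagonal _ _).2 ⟨hab, hp⟩))

lemma KgArcs.bwd_good (A : KgArcs v p nx φ) (s : ∀ j, Finset (Sym2 (Fin (p j)))) :
    KgGood v p nx φ (kgBwd p φ s) := by
  refine ⟨fun e he => ((kgBwd_mem s e).1 he).1, fun e he => ?_, fun j => ?_⟩
  · obtain ⟨-, j, a, b, h, -⟩ := (kgBwd_mem s e).1 he
    exact ⟨j, a, b, h⟩
  · apply KgArcs.edge_or _ _ _ (A.v_ne j)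
    intro hd
    obtain ⟨a, b, h1, h2, h3⟩ := A.side_eq j
    rw [kgBwd_mem]
    exact ⟨hd, j, a, b, by rw [h1, h2], Or.inr h3⟩

lemma KgArcs.bwd_fwd (A : KgArcs v p nx φ) (t : Finset (Sym2 (Fin m)))
    (G : KgGood v p nx φ t) : kgBwd p φ (fun j => kgFwd p φ t j) = t := by
  ext e
  rw [kgBwd_mem]
  constructor
  · rintro ⟨hd, j, a, b, rfl, h⟩
    rcases h with h | h
    · exact ((kgFwd_mem _ _ _ _).1 h).2
    · rcases A.polyAdj_cases j a b h with h | h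
      · exact absurd h ((kg_isDiagonal _ _).1 hd).2
      · rw [h] at hd ⊢
        rcases G.side j with hs | hs
        · exact absurd ((kg_isSide _ _).1 hs) ((kg_isDiagonal _ _).1 hd).2
        · exact hs
  · intro he
    have hd := G.diag e he
    obtain ⟨j, a, b, rfl⟩ := G.loc e he
    refine ⟨hd, j, a, b, rfl, ?_⟩
    by_cases hp : PolyAdj a b
    · exact Or.inr hp
    · left
      rw [kgFwd_mem, kg_isDiagonal]
      refine ⟨⟨?_, hp⟩, he⟩
      rintro rfl
      exact ((kg_isDiagonal _ _).1 hd).1 rfl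

/-- Cyclically adjacent vertices are consecutive in every set. -/
lemma kg_next_of_adj (hm : 2 ≤ m) (F : Finset (Fin m)) (a b : Fin m) (ha : a ∈ F) (hb : b ∈ F)
    (h : PolyAdj a b) : NextIn F a b ∨ NextIn F b a := by
  rcases h with h | h
  · left
    obtain ⟨-, -, h1, h2⟩ := (kg_next_univ hm _ _).2 h
    exact ⟨ha, hb, h1, fun x _ => h2 x (Finset.mem_univ _)⟩
  · right
    obtain ⟨-, -, h1, h2⟩ := (kg_next_univ hm _ _).2 h
    exact ⟨hb, ha, h1, fun x _ => h2 x (Finset.mem_univ _)⟩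

/-- Faces inside a subpolygon. -/
lemma KgArcs.face_iff (A : KgArcs v p nx φ) (t : Finset (Sym2 (Fin m)))
    (G : KgGood v p nx φ t) (j : Fin k) (F : Finset (Fin (p j))) :
    IsFaceSet t (F.image (φ j)) ↔ IsFaceSet (kgFwd p φ t j) F := by
  unfold IsFaceSet
  rw [Finset.card_image_of_injective _ (A.phi_inj j)]
  refine and_congr Iff.rfl (and_congr ⟨fun h a b hab => ?_, fun h a b hab => ?_⟩
    ⟨fun h => ?_, fun h => ?_⟩)
  · have h1 := h (φ j a) (φ j b) ((A.image_next j F a b).2 hab)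
    apply KgArcs.edge_or _ _ _ hab.2.2.1
    intro hd
    rw [kgFwd_mem]
    refine ⟨hd, ?_⟩
    rcases h1 with h1 | h1
    · exact absurd (A.polyAdj j a b ((kg_isSide _ _).1 h1)) ((kg_isDiagonal _ _).1 hd).2
    · exact h1
  · obtain ⟨ha, hb, -, -⟩ := id hab
    rw [Finset.mem_image] at ha hb
    obtain ⟨a, ha, rfl⟩ := ha
    obtain ⟨b, hb, rfl⟩ := hb
    rw [A.image_next] at hab
    rcases h a b hab with h1 | h1
    · rcases A.polyAdj_cases j a b ((kg_isSide _ _).1 h1) with h2 | h2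
      · exact Or.inl ((kg_isSide _ _).2 h2)
      · rw [h2]; exact G.side j
    · exact Or.inr ((kgFwd_mem _ _ _ _).1 h1).2
  · rintro e he a b rfl ha hb
    rw [← A.image_next, ← A.image_next]
    exact h _ ((kgFwd_mem _ _ _ _).1 he).2 _ _ rfl (Finset.mem_image_of_mem _ ha)
      (Finset.mem_image_of_mem _ hb)
  · rintro e he a b rfl ha hb
    rw [Finset.mem_image] at ha hb
    obtain ⟨a, ha, rfl⟩ := ha
    obtain ⟨b, hb, rfl⟩ := hb
    rw [A.image_next, A.image_next]
    by_cases hp : PolyAdj a b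
    · exact kg_next_of_adj (A.hp2 j) F a b ha hb hp
    · refine h _ ((kgFwd_mem _ _ _ _).2 ⟨?_, he⟩) _ _ rfl ha hb
      rw [kg_isDiagonal]
      refine ⟨?_, hp⟩
      rintro rfl
      exact ((kg_isDiagonal _ _).1 (G.diag _ he)).1 rfl

/-- Edges of a good dissection lie in a closed arc. -/
lemma KgArcs.edge_loc (A : KgArcs v p nx φ) (t : Finset (Sym2 (Fin m)))
    (G : KgGood v p nx φ t) (a b : Fin m) (h : EdgeOfD t s(a, b)) :
    ∃ j, (a - v j).val < p j ∧ (b - v j).val < p j := by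
  have side : ∀ a b : Fin m, (b - a).val = 1 →
      ∃ j, (a - v j).val < p j ∧ (b - v j).val < p j := by
    intro a b h
    obtain ⟨j, hj⟩ := A.cov a
    refine ⟨j, by omega, ?_⟩
    have := A.hpm j
    have := A.hp2 j
    rw [kg_adj (by omega) (v j)] at h
    omega
  rcases h with h | h
  · rcases (kg_isSide _ _).1 h with h | h
    · exact side a b h
    · obtain ⟨j, h1, h2⟩ := side b a h
      exact ⟨j, h2, h1⟩
  · obtain ⟨j, c, d, h⟩ := G.loc _ h
    refine ⟨j, ?_⟩
    rcases Sym2.eq_iff.1 h with ⟨rfl, rfl⟩ | ⟨rfl, rfl⟩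
    · exact ⟨A.lt _ _, A.lt _ _⟩
    · exact ⟨A.lt _ _, A.lt _ _⟩

/-- Classification of the faces of a good dissection. -/
lemma KgArcs.face_cases (A : KgArcs v p nx φ) (t : Finset (Sym2 (Fin m)))
    (G : KgGood v p nx φ t) (F : Finset (Fin m)) (hF : IsFaceSet t F) :
    F = Finset.image v Finset.univ ∨ ∃ j, ∃ F' : Finset (Fin (p j)), F = F'.image (φ j) := by
  classical
  by_cases hin : ∃ j, ∀ x ∈ F, (x - v j).val < p j
  · right
    obtain ⟨j, hj⟩ := hin
    refine ⟨j, Finset.univ.filter (fun y => φ j y ∈ F), ?_⟩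
    ext x
    simp only [Finset.mem_image, Finset.mem_filter, Finset.mem_univ, true_and]
    constructor
    · intro hx
      obtain ⟨y, rfl⟩ := A.range j x (hj x hx)
      exact ⟨y, hx, rfl⟩
    · rintro ⟨y, hy, rfl⟩
      exact hy
  left
  push Not at hin
  obtain ⟨h3, hE, hD⟩ := hF
  have hother : ∀ x, ∃ c ∈ F, c ≠ x := by
    intro x
    by_contra hcon
    push Not at hcon
    have : F.card ≤ ({x} : Finset (Fin m)).card := by
      apply Finset.card_le_card
      intro y hy
      simp [hcon y hy]
    simp at this
    omega
  -- F consists of vertices of v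
  have hsub : ∀ x ∈ F, ∃ j, x = v j := by
    intro x hx
    obtain ⟨j, hj⟩ := A.cov x
    refine ⟨j, ?_⟩
    by_contra hxv
    have hx0 : 0 < (x - v j).val := by
      rcases Nat.eq_zero_or_pos (x - v j).val with h | h
      · exact absurd (kg_zero _ _ h) hxv
      · exact h
    obtain ⟨w, hwF, hw⟩ := hin j
    have harc := A.arc j
    have hself := kg_self (v j)
    have hfil : x ∈ F.filter (fun y => (y - v j).val < p j) := by
      simp only [Finset.mem_filter]; exact ⟨hx, by omega⟩
    obtain ⟨y, hy, hymax⟩ := Finset.exists_max_image (F.filter (fun y => (y - v j).val < p j))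
      (fun y => (y - v j).val) ⟨x, hfil⟩
    obtain ⟨y', hy', hymin⟩ := Finset.exists_min_image (F.filter (fun y => (y - v j).val < p j))
      (fun y => (y - v j).val) ⟨x, hfil⟩
    have hyx := hymax x hfil
    have hyx' := hymin x hfil
    rw [Finset.mem_filter] at hy hy'
    have hv1 : v (nx j) ∈ F := by
      by_cases hlt : (y - v j).val + 1 < p j
      · exfalso
        obtain ⟨z, hz⟩ := kg_exists_next F y hy.1 (hother y)
        obtain ⟨l, hl1, hl2⟩ := A.edge_loc t G y z (hE y z hz)
        have := A.int_uni y j l (by omega) hlt hl1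
        subst this
        have hzm := hymax z (Finset.mem_filter.2 ⟨hz.2.1, hl2⟩)
        have hne : (y - v l).val ≠ (z - v l).val := fun h => hz.2.2.1 (kg_inj _ _ _ h)
        have := hz.2.2.2 w hwF
        rw [kg_btw (v l)] at this
        omega
      · have : v (nx j) = y := kg_inj (v j) _ _ (by omega)
        rw [this]; exact hy.1
    have hv0 : v j ∈ F := by
      by_cases hlt : 0 < (y' - v j).val
      · exfalso
        obtain ⟨z, hz⟩ := kg_exists_prev F y' hy'.1 (hother y')
        obtain ⟨l, hl1, hl2⟩ := A.edge_loc t G z y' (hE z y' hz)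
        have := A.int_uni y' j l hlt (by omega) hl2
        subst this
        have hzm := hymin z (Finset.mem_filter.2 ⟨hz.1, hl1⟩)
        have hne : (z - v l).val ≠ (y' - v l).val := fun h => hz.2.2.1 (kg_inj _ _ _ h)
        have := hz.2.2.2 w hwF
        rw [kg_btw (v l)] at this
        omega
      · have : y' = v j := kg_zero _ _ (by omega)
        rw [← this]; exact hy'.1
    have hnot : ¬ PolyAdj (v j) (v (nx j)) := by
      have := A.hpm j
      have hw' := (w - v j).isLt
      unfold PolyAdj
      rw [kg_adj (by omega) (v j), kg_adj (by omega) (v j)]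
      omega
    have hmem : s(v j, v (nx j)) ∈ t := by
      rcases G.side j with h | h
      · exact absurd ((kg_isSide _ _).1 h) hnot
      · exact h
    rcases hD _ hmem _ _ rfl hv0 hv1 with h | h
    · have := h.2.2.2 x hx
      rw [kg_btw (v j)] at this
      omega
    · have := h.2.2.2 w hwF
      rw [kg_btw (v j)] at this
      omega
  have hstep : ∀ j, v j ∈ F → v (nx j) ∈ F := by
    intro j hj
    obtain ⟨z, hz⟩ := kg_exists_next F _ hj (hother _)
    obtain ⟨l, hl1, hl2⟩ := A.edge_loc t G _ z (hE _ z hz)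
    obtain ⟨r, rfl⟩ := hsub z hz.2.1
    rcases A.ends l j hl1 with h | h
    · subst h
      rcases A.ends j r hl2 with h | h
      · subst h; exact absurd rfl hz.2.2.1
      · rw [← h]; exact hz.2.1
    · rcases A.ends l r hl2 with h' | h'
      · exfalso
        subst h'
        subst h
        obtain ⟨w, hwF, hw⟩ := hin r
        have := hz.2.2.2 w hwF
        have harc := A.arc r
        have hself := kg_self (v r)
        rw [kg_btw (v r)] at this
        have := A.hp2 r
        omega
      · exfalso
        rw [h, h'] at hz
        exact hz.2.2.1 rfl
  have hall : ∀ j, v j ∈ F := by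
    apply A.orb
    · have : 0 < F.card := by omega
      obtain ⟨x, hx⟩ := Finset.card_pos.1 this
      obtain ⟨j, rfl⟩ := hsub x hx
      exact ⟨j, hx⟩
    · exact hstep
  ext x
  simp only [Finset.mem_image, Finset.mem_univ, true_and]
  constructor
  · intro hx
    obtain ⟨j, rfl⟩ := hsub x hx
    exact ⟨j, rfl⟩
  · rintro ⟨j, rfl⟩
    exact hall j

/-- Consecutive vertices of `v`. -/
lemma KgArcs.next_v (A : KgArcs v p nx φ) (j : Fin k) :
    NextIn (Finset.image v Finset.univ) (v j) (v (nx j)) := by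
  refine ⟨by simp, by simp, A.v_ne j, ?_⟩
  intro x hx hb
  simp only [Finset.mem_image, Finset.mem_univ, true_and] at hx
  obtain ⟨l, rfl⟩ := hx
  have h1 := hb.1
  have h2 := hb.2
  have h3 := A.arc j
  have := A.not_int j l (by omega)
  rw [this, kg_self] at h1
  omega

lemma KgArcs.next_v_iff (A : KgArcs v p nx φ) (a b : Fin m)
    (h : NextIn (Finset.image v Finset.univ) a b) : ∃ j, a = v j ∧ b = v (nx j) := by
  obtain ⟨ha, hb, hne, hx⟩ := h
  simp only [Finset.mem_image, Finset.mem_univ, true_and] at ha hb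
  obtain ⟨j, rfl⟩ := ha
  obtain ⟨l, rfl⟩ := hb
  refine ⟨j, rfl, ?_⟩
  have h1 := hx (v (nx j)) (by simp)
  have h2 := A.arc j
  have h3 := A.hp2 j
  unfold CycBtw at h1
  rcases A.ends j l (by omega) with h | h
  · subst h; exact absurd rfl hne
  · rw [h]

/-- `v` is a face of each good dissection. -/
lemma KgArcs.v_face (A : KgArcs v p nx φ) (hk : 3 ≤ k) (t : Finset (Sym2 (Fin m)))
    (G : KgGood v p nx φ t) : IsFaceSet t (Finset.image v Finset.univ) := by
  refine ⟨?_, ?_, ?_⟩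
  · rw [Finset.card_image_of_injective _ A.v_inj]; simpa using hk
  · intro a b h
    obtain ⟨j, rfl, rfl⟩ := A.next_v_iff a b h
    exact G.side j
  · rintro e he a b rfl ha hb
    obtain ⟨l, h1, h2⟩ := A.edge_loc t G a b (Or.inr he)
    have hne := ((kg_isDiagonal _ _).1 (G.diag _ he)).1
    simp only [Finset.mem_image, Finset.mem_univ, true_and] at ha hb
    obtain ⟨j, rfl⟩ := ha
    obtain ⟨r, rfl⟩ := hb
    rcases A.ends l j h1 with rfl | rfl
    · rcases A.ends j r h2 with rfl | rfl
      · exact absurd rfl hne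
      · exact Or.inl (A.next_v _)
    · rcases A.ends l r h2 with rfl | rfl
      · exact Or.inr (A.next_v _)
      · exact absurd rfl hne

/-- A noncrossing dissection having `v` as a face is good. -/
lemma KgArcs.good_of_face (A : KgArcs v p nx φ) (t : Finset (Sym2 (Fin m)))
    (hd : ∀ e ∈ t, IsDiagonal e) (hnc : ∀ e ∈ t, ∀ f ∈ t, ¬ Crosses e f)
    (hF : IsFaceSet t (Finset.image v Finset.univ)) : KgGood v p nx φ t := by
  obtain ⟨-, hE, hD⟩ := hF
  have side : ∀ j, EdgeOfD t s(v j, v (nx j)) := fun j => hE _ _ (A.next_v j)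
  refine ⟨hd, ?_, side⟩
  intro e he
  induction e using Sym2.ind with
  | _ a b =>
    suffices h : ∃ j, (a - v j).val < p j ∧ (b - v j).val < p j by
      obtain ⟨j, h1, h2⟩ := h
      obtain ⟨a', rfl⟩ := A.range j a h1
      obtain ⟨b', rfl⟩ := A.range j b h2
      exact ⟨j, a', b', rfl⟩
    have int : ∀ a b : Fin m, s(a, b) ∈ t → ∀ j, 0 < (a - v j).val → (a - v j).val + 1 < p j →
        (b - v j).val < p j := by
      intro a b he j h0 h1
      by_contra hb
      have harc := A.arc j
      have hself := kg_self (v j)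
      have hlt := (b - v j).isLt
      have hnot : ¬ PolyAdj (v j) (v (nx j)) := by
        unfold PolyAdj
        rw [kg_adj (by omega) (v j), kg_adj (by omega) (v j)]
        omega
      have hmem : s(v j, v (nx j)) ∈ t := by
        rcases side j with h | h
        · exact absurd ((kg_isSide _ _).1 h) hnot
        · exact h
      apply hnc _ hmem _ he
      rw [kg_crosses]
      unfold Xor' Xor
      simp only [kg_btw (v j)]
      omega
    obtain ⟨j, hj⟩ := A.cov a
    obtain ⟨l, hl⟩ := A.cov b
    by_cases h0 : 0 < (a - v j).val
    · exact ⟨j, by omega, int a b he j h0 hj⟩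
    by_cases h1 : 0 < (b - v l).val
    · exact ⟨l, int b a (by rw [Sym2.eq_swap]; exact he) l h1 hl, by omega⟩
    have ha : a = v j := kg_zero _ _ (by omega)
    have hb : b = v l := kg_zero _ _ (by omega)
    subst ha
    subst hb
    have key : ∀ x y, NextIn (Finset.image v Finset.univ) x y →
        ∃ j, (x - v j).val < p j ∧ (y - v j).val < p j := by
      intro x y h
      obtain ⟨r, rfl, rfl⟩ := A.next_v_iff _ _ h
      have := A.arc r
      have := A.hp2 r
      exact ⟨r, by rw [kg_self]; omega, by omega⟩
    rcases hD _ he _ _ rfl (by simp) (by simp) with h | h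
    · exact key _ _ h
    · obtain ⟨r, h1, h2⟩ := key _ _ h
      exact ⟨r, h2, h1⟩

/-- Sides cross nothing. -/
lemma kg_side_not_cross (hm : 2 ≤ m) (a b c d : Fin m) (h : PolyAdj a b) :
    ¬ Crosses s(a, b) s(c, d) ∧ ¬ Crosses s(c, d) s(a, b) := by
  have ha := a.isLt
  have hb := b.isLt
  have hc := c.isLt
  have hd := d.isLt
  unfold PolyAdj at h
  rw [kg_adj0 hm, kg_adj0 hm] at h
  rw [kg_crosses, kg_crosses]
  unfold Xor' Xor
  simp only [kg_btw0]
  omega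

lemma KgArcs.bwd_noncross (A : KgArcs v p nx φ) (s : ∀ j, Finset (Sym2 (Fin (p j))))
    (hs : ∀ j, ∀ e ∈ s j, ∀ f ∈ s j, ¬ Crosses e f) :
    ∀ e ∈ kgBwd p φ s, ∀ f ∈ kgBwd p φ s, ¬ Crosses e f := by
  intro e he f hf
  rw [kgBwd_mem] at he hf
  obtain ⟨hde, j, a, b, rfl, h1⟩ := he
  obtain ⟨hdf, l, c, d, rfl, h2⟩ := hf
  by_cases hjl : j = l
  · subst hjl
    rw [A.crosses]
    rcases h1 with h1 | h1
    · rcases h2 with h2 | h2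
      · exact hs j _ h1 _ h2
      · exact (kg_side_not_cross (A.hp2 j) _ _ _ _ h2).2
    · exact (kg_side_not_cross (A.hp2 j) _ _ _ _ h1).1
  · have key : ∀ x : Fin (p l), ¬ (0 < (φ l x - v j).val ∧ (φ l x - v j).val + 1 < p j) := by
      rintro x ⟨h3, h4⟩
      exact hjl (A.int_uni _ j l h3 h4 (A.lt l x)).symm
    have hc := key c
    have hd := key d
    have ha := A.lt j a
    have hb := A.lt j b
    rw [kg_crosses]
    unfold Xor' Xor
    simp only [kg_btw (v j)]
    omega

/-- Difference of two good dissections, arc by arc. -/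
lemma KgArcs.sdiff_card (A : KgArcs v p nx φ) (t t' : Finset (Sym2 (Fin m)))
    (G : KgGood v p nx φ t) (G' : KgGood v p nx φ t') :
    (t \ t').card = ∑ j, (kgFwd p φ t j \ kgFwd p φ t' j).card := by
  classical
  have h : t \ t' = Finset.univ.biUnion
      (fun j => (kgFwd p φ t j \ kgFwd p φ t' j).image (Sym2.map (φ j))) := by
    ext e
    simp only [Finset.mem_biUnion, Finset.mem_univ, true_and, Finset.mem_image,
      Finset.mem_sdiff]
    constructor
    · rintro ⟨h1, h2⟩
      obtain ⟨j, a, b, rfl⟩ := G.loc e h1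
      have hd := (kg_isDiagonal _ _).1 (G.diag _ h1)
      refine ⟨j, s(a, b), ⟨?_, ?_⟩, by simp⟩
      · rw [kgFwd_mem]
        refine ⟨?_, h1⟩
        rw [kg_isDiagonal]
        refine ⟨fun h => hd.1 (by rw [h]), fun hp => ?_⟩
        rcases A.polyAdj_cases j a b hp with h | h
        · exact hd.2 h
        · rw [h] at h2
          rcases G'.side j with h' | h'
          · rw [← h] at h'
            exact hd.2 ((kg_isSide _ _).1 h')
          · exact h2 h'
      · rw [kgFwd_mem]
        exact fun h => h2 h.2
    · rintro ⟨j, e', ⟨h1, h2⟩, rfl⟩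
      induction e' using Sym2.ind with
      | _ a b =>
        rw [kgFwd_mem] at h1 h2
        simp only [Sym2.map_mk]
        exact ⟨h1.2, fun h => h2 ⟨h1.1, h⟩⟩
  rw [h, Finset.card_biUnion]
  · apply Finset.sum_congr rfl
    intro j _
    exact Finset.card_image_of_injective _ (Sym2.map.injective (A.phi_inj j))
  · intro j _ l _ hjl
    rw [Function.onFun, Finset.disjoint_left]
    intro e he he'
    simp only [Finset.mem_image, Finset.mem_sdiff] at he he'
    obtain ⟨e1, ⟨h1, -⟩, rfl⟩ := he
    obtain ⟨e2, -, h2⟩ := he'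
    induction e1 using Sym2.ind with
    | _ a b =>
      induction e2 using Sym2.ind with
      | _ c d =>
        rw [kgFwd_mem, kg_isDiagonal] at h1
        simp only [Sym2.map_mk] at h2
        exact hjl (A.chord_uni j l a b c d h1.1.1 h2.symm)

end arcs

/-- The arcs of the polygon of the main theorem. -/
lemma kg_arcs (k n : ℕ) (hk : 3 ≤ k) (hn : 2 ≤ n)
    (v : Fin k → Fin ((k - 2) * n + 2)) (i : Fin k → ℕ)
    (nx : Fin k → Fin k) (hnx : ∀ j, (nx j).val = (j.val + 1) % k)
    (harc : ∀ j : Fin k, (v (nx j) - v j).val = (k - 2) * i j + 1)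
    (hsum : ∑ j : Fin k, i j = n - 1) :
    KgArcs v (fun j => (k - 2) * i j + 2)
      nx
      (fun j x => ⟨((v j).val + x.val) % ((k - 2) * n + 2), Nat.mod_lt _ (by omega)⟩) := by
  have hpm : ∀ j, (k - 2) * i j + 2 < (k - 2) * n + 2 := by
    intro j
    have h1 : i j ≤ ∑ j : Fin k, i j := Finset.single_le_sum (fun _ _ => Nat.zero_le _)
      (Finset.mem_univ j)
    have h2 : i j < n := by omega
    have := Nat.mul_lt_mul_of_pos_left h2 (show 0 < k - 2 by omega)
    omega
  have hφ : ∀ (j : Fin k) (x : ℕ), x < (k - 2) * n + 2 →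
      ((⟨((v j).val + x) % ((k - 2) * n + 2), Nat.mod_lt _ (by omega)⟩ :
        Fin ((k - 2) * n + 2)) - v j).val = x := by
    intro j x hx
    have hv := (v j).isLt
    rw [kg_sub_val]
    simp only
    by_cases h : (v j).val + x < (k - 2) * n + 2
    · rw [Nat.mod_eq_of_lt h]
      split_ifs <;> omega
    · rw [Nat.mod_eq_sub_mod (by omega), Nat.mod_eq_of_lt (by omega)]
      split_ifs <;> omega
  have hcov : ∀ x, ∃ j, (x - v j).val + 1 < (k - 2) * i j + 2 := by
    intro x
    obtain ⟨j, -, hmin⟩ := Finset.exists_min_image (Finset.univ : Finset (Fin k))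
      (fun j => (x - v j).val) ⟨⟨0, by omega⟩, Finset.mem_univ _⟩
    refine ⟨j, ?_⟩
    by_contra hcon
    have h1 := hmin (nx j) (Finset.mem_univ _)
    have h2 := harc j
    have hx := x.isLt
    have hv := (v j).isLt
    have hv' := (v (nx j)).isLt
    rw [kg_sub_val] at h1 h2 hcon
    rw [kg_sub_val] at h1
    split_ifs at h1 h2 hcon <;> omega
  refine ⟨fun j x => hφ j x.val (x.isLt.trans (hpm j)), fun j => by omega, hpm,
    fun j => by rw [harc j], hcov, ?_, ?_, ?_⟩
  · let g : (Σ j : Fin k, Fin ((k - 2) * i j + 1)) → Fin ((k - 2) * n + 2) := fun q =>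
      ⟨((v q.1).val + q.2.val) % ((k - 2) * n + 2), Nat.mod_lt _ (by omega)⟩
    have hg : ∀ q, (g q - v q.1).val = q.2.val := by
      intro q
      have h1 := q.2.isLt
      have h2 := hpm q.1
      exact hφ q.1 q.2.val (by omega)
    have hsurj : Function.Surjective g := by
      intro x
      obtain ⟨j, hj⟩ := hcov x
      refine ⟨⟨j, ⟨(x - v j).val, by omega⟩⟩, ?_⟩
      apply kg_inj (v j)
      exact hg ⟨j, ⟨(x - v j).val, by omega⟩⟩
    have hcard : Fintype.card (Σ j : Fin k, Fin ((k - 2) * i j + 1))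
        = Fintype.card (Fin ((k - 2) * n + 2)) := by
      simp only [Fintype.card_sigma, Fintype.card_fin, Finset.sum_add_distrib,
        ← Finset.mul_sum, hsum, Finset.sum_const, Finset.card_univ, smul_eq_mul, mul_one]
      obtain ⟨r, rfl⟩ : ∃ r, n = r + 1 := ⟨n - 1, by omega⟩
      rw [Nat.add_sub_cancel, Nat.mul_add]
      omega
    have hinj := ((Fintype.bijective_iff_surjective_and_card g).2 ⟨hsurj, hcard⟩).1
    intro x j l h1 h2
    have h1' : g ⟨j, ⟨(x - v j).val, by omega⟩⟩ = x := by
      apply kg_inj (v j)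
      exact hg ⟨j, ⟨(x - v j).val, by omega⟩⟩
    have h2' : g ⟨l, ⟨(x - v l).val, by omega⟩⟩ = x := by
      apply kg_inj (v l)
      exact hg ⟨l, ⟨(x - v l).val, by omega⟩⟩
    exact congrArg Sigma.fst (hinj (h1'.trans h2'.symm))
  · intro j h
    have hj := j.isLt
    rw [Fin.ext_iff] at h
    simp only [hnx, Nat.mod_add_mod] at h
    by_cases h1 : j.val + 1 + 1 < k
    · rw [Nat.mod_eq_of_lt h1] at h
      omega
    · rw [Nat.mod_eq_sub_mod (by omega), Nat.mod_eq_of_lt (by omega)] at h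
      omega
  · rintro P ⟨j, hj⟩ hP l
    have key : ∀ r : ℕ, P ⟨(j.val + r) % k, Nat.mod_lt _ (by omega)⟩ := by
      intro r
      induction r with
      | zero =>
        convert hj using 2
        simp [Nat.mod_eq_of_lt j.isLt]
      | succ r ih =>
        convert hP _ ih using 1
        apply Fin.ext
        simp only [hnx, Nat.mod_add_mod]
        rfl
    have hl := l.isLt
    have hj' := j.isLt
    convert key (l.val + k - j.val) using 2
    rw [show j.val + (l.val + k - j.val) = l.val + k by omega, Nat.add_mod_right,
      Nat.mod_eq_of_lt hl]

/-- Restrictions of `k`-angulations are `k`-angulations. -/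
lemma kg_fwd_isKAng {k n : ℕ} (hk : 3 ≤ k) {v : Fin k → Fin ((k - 2) * n + 2)} {i : Fin k → ℕ}
    {nx : Fin k → Fin k} {φ : ∀ j, Fin ((k - 2) * i j + 2) → Fin ((k - 2) * n + 2)}
    (A : KgArcs v (fun j => (k - 2) * i j + 2) nx φ) (t : Finset (Sym2 (Fin ((k - 2) * n + 2))))
    (ht : IsKAngulation k n t) (G : KgGood v (fun j => (k - 2) * i j + 2) nx φ t) (j : Fin k) :
    IsKAngulation k (i j) (kgFwd (fun j => (k - 2) * i j + 2) φ t j) := by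
  obtain ⟨hd, hnc, hc, hF⟩ := ht
  have h1 : ∀ e ∈ kgFwd (fun j => (k - 2) * i j + 2) φ t j, IsDiagonal e := by
    intro e he
    induction e using Sym2.ind with
    | _ a b => exact ((kgFwd_mem (p := fun j => (k - 2) * i j + 2) (φ := φ) t j a b).1 he).1
  have h2 : ∀ e ∈ kgFwd (fun j => (k - 2) * i j + 2) φ t j,
      ∀ f ∈ kgFwd (fun j => (k - 2) * i j + 2) φ t j, ¬ Crosses e f := by
    intro e he f hf
    induction e using Sym2.ind with
    | _ a b =>
      induction f using Sym2.ind with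
      | _ c d =>
        rw [← A.crosses]
        exact hnc _ ((kgFwd_mem (p := fun j => (k - 2) * i j + 2) (φ := φ) t j a b).1 he).2 _ ((kgFwd_mem (p := fun j => (k - 2) * i j + 2) (φ := φ) t j c d).1 hf).2
  have h3 : ∀ F, IsFaceSet (kgFwd (fun j => (k - 2) * i j + 2) φ t j) F → F.card = k := by
    intro F hFF
    exact (Finset.card_image_of_injective F (A.phi_inj j)).symm.trans
      (hF _ ((A.face_iff t G j F).2 hFF))
  refine ⟨h1, h2, ?_, h3⟩
  rcases Nat.eq_zero_or_pos (i j) with h0 | h0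
  · have : kgFwd (fun j => (k - 2) * i j + 2) φ t j = ∅ := by
      apply Finset.eq_empty_of_forall_notMem
      intro e he
      have := h1 e he
      induction e using Sym2.ind with
      | _ a b =>
        rw [kg_isDiagonal] at this
        have ha := a.isLt
        have hb := b.isLt
        have hz : (k - 2) * i j = 0 := by rw [h0, Nat.mul_zero]
        obtain ⟨hne, hp⟩ := this
        rw [ne_eq, Fin.ext_iff] at hne
        unfold PolyAdj at hp
        rw [kg_adj0 (by omega), kg_adj0 (by omega)] at hp
        omega
    rw [this, h0]; rfl
  · have hpos : 0 < (k - 2) * i j := Nat.mul_pos (by omega) h0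
    have := kg_euler_univ hk (by omega) _ h1 h2 h3
    have := Nat.eq_of_mul_eq_mul_left (show 0 < k - 2 by omega) (Nat.add_right_cancel this)
    omega

/-- Glued `k`-angulations are `k`-angulations. -/
lemma kg_bwd_isKAng {k n : ℕ} (hk : 3 ≤ k) (hn : 2 ≤ n)
    {v : Fin k → Fin ((k - 2) * n + 2)} {i : Fin k → ℕ}
    {nx : Fin k → Fin k} {φ : ∀ j, Fin ((k - 2) * i j + 2) → Fin ((k - 2) * n + 2)}
    (A : KgArcs v (fun j => (k - 2) * i j + 2) nx φ)
    (s : ∀ j, Finset (Sym2 (Fin ((k - 2) * i j + 2))))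
    (hs : ∀ j, IsKAngulation k (i j) (s j)) :
    IsKAngulation k n (kgBwd (fun j => (k - 2) * i j + 2) φ s) := by
  have G := A.bwd_good s
  have h2 := A.bwd_noncross s (fun j => (hs j).2.1)
  have h3 : ∀ F, IsFaceSet (kgBwd (fun j => (k - 2) * i j + 2) φ s) F → F.card = k := by
    intro F hF
    rcases A.face_cases _ G F hF with rfl | ⟨j, F', rfl⟩
    · rw [Finset.card_image_of_injective _ A.v_inj]; simp
    · rw [Finset.card_image_of_injective _ (A.phi_inj j)]
      rw [A.face_iff _ G, A.fwd_bwd s (fun j => (hs j).1)] at hF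
      exact (hs j).2.2.2 F' hF
  refine ⟨G.diag, h2, ?_, h3⟩
  have hpos : 0 < (k - 2) * n := Nat.mul_pos (by omega) (by omega)
  have := kg_euler_univ hk (by omega) _ G.diag h2 h3
  have := Nat.eq_of_mul_eq_mul_left (show 0 < k - 2 by omega) (Nat.add_right_cancel this)
  omega

lemma kg_sum_one {ι : Type*} [Fintype ι] [DecidableEq ι] (f : ι → ℕ) :
    ∑ j, f j = 1 ↔ ∃ j, f j = 1 ∧ ∀ l, l ≠ j → f l = 0 := by
  constructor
  · intro h
    have : ∃ j, f j ≠ 0 := by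
      by_contra hcon
      push Not at hcon
      simp [hcon] at h
    obtain ⟨j, hj⟩ := this
    have h1 := Finset.add_sum_erase Finset.univ f (Finset.mem_univ j)
    have h2 : ∑ x ∈ Finset.univ.erase j, f x = 0 := by omega
    refine ⟨j, by omega, fun l hl => ?_⟩
    rw [Finset.sum_eq_zero_iff] at h2
    exact h2 l (by simp [hl])
  · rintro ⟨j, h1, h2⟩
    rw [Finset.sum_eq_single j (fun l _ hl => h2 l hl) (by simp), h1]

/-- let `k ≥ 3`, `n ≥ 2`, and let `T` be a `k`-gon whose vertices
`v 0, v 1, …, v (k-1)` (in cyclic order) lie among the vertices of the convex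
`((k-2)n+2)`-gon, the arc from `v j` to `v (j+1)` having length `(k-2)·i j + 1`, with
`∑ j, i j = n - 1`. Then the set of `k`-angulations containing `T` as one of their
`k`-gons induces a subgraph of the flip graph `K_{k,(k-2)n+2}` isomorphic to the
Cartesian product of the flip graphs `K_{k,(k-2)·i j+2}` of the `k` sub-polygons cut
off by the sides of `T`. -/
theorem kgon_class_isomorphic_boxProd (k n : ℕ) (hk : 3 ≤ k) (hn : 2 ≤ n)
    (v : Fin k → Fin ((k - 2) * n + 2)) (i : Fin k → ℕ)
    (harc : ∀ j : Fin k,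
      (v ⟨(j.val + 1) % k, Nat.mod_lt _ (by omega)⟩ - v j).val = (k - 2) * i j + 1)
    (hsum : ∑ j : Fin k, i j = n - 1) :
    Nonempty (((kAngGraph k n).induce
        {t : KAngulation k n | IsFaceSet t.val (Finset.image v Finset.univ)}) ≃g
      piBoxProd (fun j : Fin k => kAngGraph k (i j))) := by
  classical
  obtain ⟨nx, φ, A⟩ : ∃ (nx : Fin k → Fin k)
      (φ : ∀ j, Fin ((k - 2) * i j + 2) → Fin ((k - 2) * n + 2)),
      KgArcs v (fun j => (k - 2) * i j + 2) nx φ :=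
    ⟨_, _, kg_arcs k n hk hn v i _ (fun j => rfl) harc hsum⟩
  have good : ∀ x : {t : KAngulation k n | IsFaceSet t.val (Finset.image v Finset.univ)},
      KgGood v (fun j => (k - 2) * i j + 2) nx φ x.1.val := fun x =>
    A.good_of_face x.1.val x.1.2.1 x.1.2.2.1 x.2
  refine ⟨⟨⟨fun x j => ⟨kgFwd (fun j => (k - 2) * i j + 2) φ x.1.val j,
      kg_fwd_isKAng hk A x.1.val x.1.2 (good x) j⟩,
    fun s => ⟨⟨kgBwd (fun j => (k - 2) * i j + 2) φ (fun j => (s j).val),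
      kg_bwd_isKAng hk hn A _ (fun j => (s j).2)⟩, A.v_face hk _ (A.bwd_good _)⟩, ?_, ?_⟩, ?_⟩⟩
  · intro x
    apply Subtype.ext
    apply Subtype.ext
    exact A.bwd_fwd x.1.val (good x)
  · intro s
    funext j
    apply Subtype.ext
    exact A.fwd_bwd (fun j => (s j).val) (fun j => (s j).2.1) j
  · intro x y
    have hx := fun j => (kg_fwd_isKAng hk A x.1.val x.1.2 (good x) j).2.2.1
    have hy := fun j => (kg_fwd_isKAng hk A y.1.val y.1.2 (good y) j).2.2.1
    have hxy := fun j => Finset.card_sdiff_comm ((hx j).trans (hy j).symm)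
    have e1 := A.sdiff_card x.1.val y.1.val (good x) (good y)
    have e2 := A.sdiff_card y.1.val x.1.val (good y) (good x)
    have e3 : (y.1.val \ x.1.val).card = (x.1.val \ y.1.val).card := by
      rw [e1, e2]
      exact Finset.sum_congr rfl (fun j _ => (hxy j).symm)
    have rhs : ((kAngGraph k n).induce
        {t : KAngulation k n | IsFaceSet t.val (Finset.image v Finset.univ)}).Adj x y ↔
        ∑ j, (kgFwd (fun j => (k - 2) * i j + 2) φ x.1.val j \
          kgFwd (fun j => (k - 2) * i j + 2) φ y.1.val j).card = 1 := by
      rw [← e1]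
      exact ⟨fun h => h.1, fun h => ⟨h, e3.trans h⟩⟩
    rw [rhs, kg_sum_one]
    change (∃ j, (_ ∧ _) ∧ _) ↔ _
    apply exists_congr
    intro j
    apply and_congr
    · constructor
      · exact fun h => h.1
      · exact fun h => ⟨h, (hxy j).symm.trans h⟩
    · apply forall_congr'
      intro l
      apply imp_congr Iff.rfl
      constructor
      · intro h
        have h := congrArg Subtype.val h
        change kgFwd (fun j => (k - 2) * i j + 2) φ x.1.val l
          = kgFwd (fun j => (k - 2) * i j + 2) φ y.1.val l at h
        rw [h]; simp
      · intro h
        apply Subtype.ext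
        apply Finset.eq_of_subset_of_card_le
        · exact Finset.sdiff_eq_empty_iff_subset.1 (Finset.card_eq_zero.1 h)
        · exact ((hy l).trans (hx l).symm).le
end

section
/- For every n ≥ 1, every integer k with 1 ≤ k ≤ n, and every triangulation t of the convex (n+2)-gon, there exist a subset S ⊆ V(K_n) with t ∈ S and natural numbers i_1, …, i_k such that the subgraph of the associahedron graph K_n induced by S is isomorphic to the Cartesian product K_{i_1} □ K_{i_2} □ ⋯ □ K_{i_k}, and i_j ≤ n / 2^{⌊log_3 k⌋} for every j. -/
open Finset

/-- A triangulation of the convex `(n+2)`-gon: a maximal set of pairwise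
non-crossing diagonals. -/
def IsTriangulation (n : ℕ) (t : Finset (Sym2 (Fin (n + 2)))) : Prop :=
  (∀ e ∈ t, IsDiagonal e) ∧
  (∀ e ∈ t, ∀ f ∈ t, ¬ Crosses e f) ∧
  (∀ e, IsDiagonal e → (∀ f ∈ t, ¬ Crosses e f) → e ∈ t)

/-- The type of triangulations of the convex `(n+2)`-gon. -/
def Triangulation (n : ℕ) : Type :=
  {t : Finset (Sym2 (Fin (n + 2))) // IsTriangulation n t}

instance (n : ℕ) : DecidableEq (Triangulation n) := fun a b =>
  decidable_of_iff (a.val = b.val) Subtype.ext_iff.symm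

noncomputable instance (n : ℕ) : Fintype (Triangulation n) := by
  classical exact Subtype.fintype _

/-- The associahedron graph `K_n`: vertices are the triangulations of the convex
`(n+2)`-gon, with an edge between two triangulations iff they differ in exactly
one diagonal (a flip). -/
def assocGraph (n : ℕ) : SimpleGraph (Triangulation n) where
  Adj s t := (s.val \ t.val).card = 1 ∧ (t.val \ s.val).card = 1
  symm := ⟨fun s t h => ⟨h.2, h.1⟩⟩
  loopless := ⟨fun s h => by simp at h⟩

/-- The set of edges of `G` with exactly one endpoint in `S`. -/
def edgeBoundary {V : Type*} (G : SimpleGraph V) (S : Set V) : Set (Sym2 V) :=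
  {e | e ∈ G.edgeSet ∧ ∃ u v : V, e = s(u, v) ∧ u ∈ S ∧ v ∉ S}

namespace AssocAux

def cr (e f : ℕ × ℕ) : Prop :=
  (e.1 < f.1 ∧ f.1 < e.2 ∧ e.2 < f.2) ∨ (f.1 < e.1 ∧ e.1 < f.2 ∧ f.2 < e.2)

/-- maximal non-crossing sets of pairs (sides included) on the vertex set `A`. -/
def IsTri (A : Finset ℕ) (T : Finset (ℕ × ℕ)) : Prop :=
  ∀ e : ℕ × ℕ, e ∈ T ↔ (e.1 ∈ A ∧ e.2 ∈ A ∧ e.1 < e.2 ∧ ∀ f ∈ T, ¬ cr e f)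

def Tri (A : Finset ℕ) : Type := {T : Finset (ℕ × ℕ) // IsTri A T}

def gr (A : Finset ℕ) : SimpleGraph (Tri A) where
  Adj s t := (s.val \ t.val).card = 1 ∧ (t.val \ s.val).card = 1
  symm := ⟨fun s t h => ⟨h.2, h.1⟩⟩
  loopless := ⟨fun s h => by simp at h⟩

lemma cr_symm {e f : ℕ × ℕ} (h : cr e f) : cr f e := by
  unfold cr at *; omega

lemma IsTri.eq_of_subset {A : Finset ℕ} {T T' : Finset (ℕ × ℕ)} (h : IsTri A T)
    (h' : IsTri A T') (hs : T ⊆ T') : T = T' := by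
  apply Finset.Subset.antisymm hs
  intro e he
  obtain ⟨h1, h2, h3, h4⟩ := (h' e).1 he
  exact (h e).2 ⟨h1, h2, h3, fun f hf => h4 f (hs hf)⟩

lemma IsTri.inner {A : Finset ℕ} {T : Finset (ℕ × ℕ)} (h : IsTri A T) {a b : ℕ}
    (hab : (a, b) ∈ T) :
    IsTri (A.filter fun x => a ≤ x ∧ x ≤ b) (T.filter fun e => a ≤ e.1 ∧ e.2 ≤ b) := by
  intro e
  have hab' := (h _).1 hab
  simp only [Finset.mem_filter]
  constructor
  · rintro ⟨he, h1, h2⟩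
    obtain ⟨g1, g2, g3, g4⟩ := (h e).1 he
    refine ⟨⟨g1, by omega⟩, ⟨g2, by omega⟩, g3, fun f hf => g4 f hf.1⟩
  · rintro ⟨⟨g1, _, _⟩, ⟨g2, _, _⟩, g3, g4⟩
    refine ⟨(h e).2 ⟨g1, g2, g3, fun f hf hc => ?_⟩, by omega, by omega⟩
    have := hab'.2.2.2 f hf
    have hf' := (h f).1 hf
    by_cases hin : a ≤ f.1 ∧ f.2 ≤ b
    · exact g4 f ⟨hf, hin⟩ hc
    · unfold cr at *
      simp only at *
      omega

lemma IsTri.outer {A : Finset ℕ} {T : Finset (ℕ × ℕ)} (h : IsTri A T) {a b : ℕ}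
    (hab : (a, b) ∈ T) :
    IsTri (A.filter fun x => ¬ (a < x ∧ x < b))
      (T.filter fun e => ¬ (a < e.1 ∧ e.1 < b) ∧ ¬ (a < e.2 ∧ e.2 < b)) := by
  intro e
  have hab' := (h _).1 hab
  simp only [Finset.mem_filter]
  constructor
  · rintro ⟨he, h1, h2⟩
    obtain ⟨g1, g2, g3, g4⟩ := (h e).1 he
    refine ⟨⟨g1, by omega⟩, ⟨g2, by omega⟩, g3, fun f hf => g4 f hf.1⟩
  · rintro ⟨⟨g1, k1⟩, ⟨g2, k2⟩, g3, g4⟩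
    refine ⟨(h e).2 ⟨g1, g2, g3, fun f hf hc => ?_⟩, k1, k2⟩
    have := hab'.2.2.2 f hf
    have hf' := (h f).1 hf
    by_cases hin : ¬ (a < f.1 ∧ f.1 < b) ∧ ¬ (a < f.2 ∧ f.2 < b)
    · exact g4 f ⟨hf, hin⟩ hc
    · unfold cr at *
      simp only at *
      omega

lemma IsTri.inner_mem {A : Finset ℕ} {a b : ℕ} (ha : a ∈ A) (hb : b ∈ A) (hab : a < b)
    {T : Finset (ℕ × ℕ)} (h : IsTri (A.filter fun x => a ≤ x ∧ x ≤ b) T) : (a, b) ∈ T := by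
  refine (h _).2 ⟨by simp [ha]; omega, by simp [hb]; omega, hab, fun f hf => ?_⟩
  have hf' := (h f).1 hf
  simp only [Finset.mem_filter] at hf'
  unfold cr
  simp only
  omega

lemma IsTri.outer_mem {A : Finset ℕ} {a b : ℕ} (ha : a ∈ A) (hb : b ∈ A) (hab : a < b)
    {T : Finset (ℕ × ℕ)} (h : IsTri (A.filter fun x => ¬ (a < x ∧ x < b)) T) : (a, b) ∈ T := by
  refine (h _).2 ⟨by simp [ha], by simp [hb], hab, fun f hf => ?_⟩
  have hf' := (h f).1 hf
  simp only [Finset.mem_filter] at hf'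
  unfold cr
  simp only
  omega

lemma IsTri.glue {A : Finset ℕ} {a b : ℕ} (ha : a ∈ A) (hb : b ∈ A) (hab : a < b)
    {T1 T2 : Finset (ℕ × ℕ)} (h1 : IsTri (A.filter fun x => a ≤ x ∧ x ≤ b) T1)
    (h2 : IsTri (A.filter fun x => ¬ (a < x ∧ x < b)) T2) : IsTri A (T1 ∪ T2) := by
  have m1 := h1.inner_mem ha hb hab
  have m2 := h2.outer_mem ha hb hab
  intro e
  rw [Finset.mem_union]
  constructor
  · intro he
    rcases he with he | he
    · obtain ⟨g1, g2, g3, g4⟩ := (h1 e).1 he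
      simp only [Finset.mem_filter] at g1 g2
      refine ⟨g1.1, g2.1, g3, fun f hf hc => ?_⟩
      rcases Finset.mem_union.1 hf with hf | hf
      · exact g4 f hf hc
      · have := (h2 f).1 hf
        simp only [Finset.mem_filter] at this
        unfold cr at hc
        omega
    · obtain ⟨g1, g2, g3, g4⟩ := (h2 e).1 he
      simp only [Finset.mem_filter] at g1 g2
      refine ⟨g1.1, g2.1, g3, fun f hf hc => ?_⟩
      rcases Finset.mem_union.1 hf with hf | hf
      · have := (h1 f).1 hf
        simp only [Finset.mem_filter] at this
        unfold cr at hc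
        omega
      · exact g4 f hf hc
  · rintro ⟨g1, g2, g3, g4⟩
    have hx := g4 (a, b) (Finset.mem_union_left _ m1)
    by_cases hin : a ≤ e.1 ∧ e.2 ≤ b
    · left
      refine (h1 e).2 ⟨?_, ?_, g3, fun f hf => g4 f (Finset.mem_union_left _ hf)⟩
      · simp only [Finset.mem_filter]; exact ⟨g1, by omega⟩
      · simp only [Finset.mem_filter]; exact ⟨g2, by omega⟩
    · right
      unfold cr at hx
      simp only at hx
      refine (h2 e).2 ⟨?_, ?_, g3, fun f hf => g4 f (Finset.mem_union_right _ hf)⟩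
      · simp only [Finset.mem_filter]; exact ⟨g1, by omega⟩
      · simp only [Finset.mem_filter]; exact ⟨g2, by omega⟩

def glue {A : Finset ℕ} {a b : ℕ} (ha : a ∈ A) (hb : b ∈ A) (hab : a < b)
    (T1 : Tri (A.filter fun x => a ≤ x ∧ x ≤ b))
    (T2 : Tri (A.filter fun x => ¬ (a < x ∧ x < b))) : Tri A :=
  ⟨T1.1 ∪ T2.1, T1.2.glue ha hb hab T2.2⟩

/-- common chords of an inner and an outer triangulation: only `(a,b)`. -/
lemma inner_outer {A : Finset ℕ} {a b : ℕ}
    {T1 T2 : Finset (ℕ × ℕ)} (h1 : IsTri (A.filter fun x => a ≤ x ∧ x ≤ b) T1)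
    (h2 : IsTri (A.filter fun x => ¬ (a < x ∧ x < b)) T2) {e : ℕ × ℕ} (e1 : e ∈ T1)
    (e2 : e ∈ T2) : e = (a, b) := by
  have g1 := (h1 e).1 e1
  have g2 := (h2 e).1 e2
  simp only [Finset.mem_filter] at g1 g2
  ext <;> simp only <;> omega

section
variable {A : Finset ℕ} {a b : ℕ} (ha : a ∈ A) (hb : b ∈ A) (hab : a < b)
    (T1 T1' : Tri (A.filter fun x => a ≤ x ∧ x ≤ b))
    (T2 T2' : Tri (A.filter fun x => ¬ (a < x ∧ x < b)))

lemma glue_card : ((glue ha hb hab T1 T2).1 \ (glue ha hb hab T1' T2').1).card =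
    (T1.1 \ T1'.1).card + (T2.1 \ T2'.1).card := by
  have m1 := T1.2.inner_mem ha hb hab
  have m2 := T2.2.outer_mem ha hb hab
  have m1' := T1'.2.inner_mem ha hb hab
  have m2' := T2'.2.outer_mem ha hb hab
  rw [← Finset.card_union_of_disjoint]
  · congr 1
    ext e
    have k1 := @inner_outer A a b _ _ T1.2 T2'.2 e
    have k2 := @inner_outer A a b _ _ T1'.2 T2.2 e
    simp only [glue, Finset.mem_sdiff, Finset.mem_union]
    grind
  · rw [Finset.disjoint_left]
    intro e he he'
    rw [Finset.mem_sdiff] at he he'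
    have := inner_outer T1.2 T2.2 he.1 he'.1
    grind

lemma Tri.eq_of_card {A : Finset ℕ} (T T' : Tri A) (h : (T.1 \ T'.1).card = 0) : T = T' := by
  apply Subtype.ext
  apply T.2.eq_of_subset T'.2
  simpa using h

lemma glue_adj : (gr A).Adj (glue ha hb hab T1 T2) (glue ha hb hab T1' T2') ↔
    ((gr _).Adj T1 T1' ∧ T2 = T2') ∨ (T1 = T1' ∧ (gr _).Adj T2 T2') := by
  simp only [gr, glue_card]
  have e1 := Tri.eq_of_card T1 T1'
  have e1' := Tri.eq_of_card T1' T1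
  have e2 := Tri.eq_of_card T2 T2'
  have e2' := Tri.eq_of_card T2' T2
  constructor
  · rintro ⟨h, h'⟩
    by_cases z1 : T1 = T1'
    · subst z1
      right
      simp at h h'
      exact ⟨rfl, h, h'⟩
    · left
      have : (T1.1 \ T1'.1).card ≠ 0 := fun h => z1 (e1 h)
      have : (T1'.1 \ T1.1).card ≠ 0 := fun h => z1 (e1' h).symm
      exact ⟨by omega, e2 (by omega)⟩
  · rintro (⟨⟨h, h'⟩, rfl⟩ | ⟨rfl, h, h'⟩) <;> simp [h, h']

lemma glue_inj (h : glue ha hb hab T1 T2 = glue ha hb hab T1' T2') : T1 = T1' ∧ T2 = T2' := by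
  have := glue_card ha hb hab T1 T1' T2 T2'
  rw [h] at this
  simp only [Finset.sdiff_self, Finset.card_empty] at this
  exact ⟨Tri.eq_of_card _ _ (by omega), Tri.eq_of_card _ _ (by omega)⟩

end

lemma glue_restrict {A : Finset ℕ} {a b : ℕ} (ha : a ∈ A) (hb : b ∈ A) (hab : a < b)
    (T : Tri A) (h : (a, b) ∈ T.1) :
    glue ha hb hab ⟨_, T.2.inner h⟩ ⟨_, T.2.outer h⟩ = T := by
  apply Subtype.ext
  ext e
  simp only [glue, Finset.mem_union, Finset.mem_filter]
  constructor
  · tauto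
  · intro he
    have h1 := (T.2 e).1 he
    have h2 := h1.2.2.2 _ h
    unfold cr at h2
    simp only at h2
    by_cases hin : a ≤ e.1 ∧ e.2 ≤ b
    · exact Or.inl ⟨he, hin⟩
    · exact Or.inr ⟨he, by omega⟩

/-- `T` lies in an induced copy of a product of `l` associahedra satisfying `P`. -/
def Claim (A : Finset ℕ) (T : Tri A) (l : ℕ) (P : ℕ → Prop) : Prop :=
  ∃ (ι : Type) (_ : Fintype ι), Fintype.card ι = l ∧ ∃ i : ι → ℕ, (∀ j, P (i j)) ∧
    ∃ φ : piBoxProd (fun j => assocGraph (i j)) ↪g gr A, T ∈ Set.range φ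

lemma Claim.combine {A : Finset ℕ} {T : Tri A} {a b : ℕ} (h : (a, b) ∈ T.1) {l1 l2 : ℕ}
    {P : ℕ → Prop} (h1 : Claim _ ⟨_, T.2.inner h⟩ l1 P) (h2 : Claim _ ⟨_, T.2.outer h⟩ l2 P) :
    Claim A T (l1 + l2) P := by
  obtain ⟨ha, hb, hab, -⟩ := (T.2 _).1 h
  simp only at ha hb hab
  obtain ⟨ι1, _, c1, i1, p1, φ1, x1, r1⟩ := h1
  obtain ⟨ι2, _, c2, i2, p2, φ2, x2, r2⟩ := h2
  refine ⟨ι1 ⊕ ι2, inferInstance, by simp [c1, c2], Sum.elim i1 i2, ?_, ?_⟩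
  · rintro (j | j)
    · exact p1 j
    · exact p2 j
  let F : (∀ j, Triangulation (Sum.elim i1 i2 j)) → Tri A := fun x =>
    glue ha hb hab (φ1 fun j => x (Sum.inl j)) (φ2 fun j => x (Sum.inr j))
  have Finj : Function.Injective F := by
    intro x y hxy
    obtain ⟨e1, e2⟩ := glue_inj _ _ _ _ _ _ _ hxy
    have e1 := φ1.injective e1
    have e2 := φ2.injective e2
    funext j
    rcases j with j | j
    · exact congrFun e1 j
    · exact congrFun e2 j
  refine ⟨⟨⟨F, Finj⟩, ?_⟩, ?_⟩
  · intro x y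
    change (gr A).Adj (F x) (F y) ↔ _
    have key : ∀ (u1 v1 : ∀ j, Triangulation (i1 j)) (u2 v2 : ∀ j, Triangulation (i2 j)),
        (gr A).Adj (glue ha hb hab (φ1 u1) (φ2 u2)) (glue ha hb hab (φ1 v1) (φ2 v2)) ↔
        ((piBoxProd (fun j => assocGraph (i1 j))).Adj u1 v1 ∧ u2 = v2) ∨
        (u1 = v1 ∧ (piBoxProd (fun j => assocGraph (i2 j))).Adj u2 v2) := by
      intro u1 v1 u2 v2
      rw [glue_adj, φ1.map_adj_iff, φ2.map_adj_iff, φ1.injective.eq_iff, φ2.injective.eq_iff]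
    refine (key _ _ _ _).trans ?_
    simp only [piBoxProd]
    constructor
    · rintro (⟨⟨j, hj, hj'⟩, he⟩ | ⟨he, ⟨j, hj, hj'⟩⟩)
      · refine ⟨Sum.inl j, hj, ?_⟩
        rintro (j' | j') hne
        · exact hj' j' (by simpa using hne)
        · exact congrFun he j'
      · refine ⟨Sum.inr j, hj, ?_⟩
        rintro (j' | j') hne
        · exact congrFun he j'
        · exact hj' j' (by simpa using hne)
    · rintro ⟨j | j, hj, hj'⟩
      · left
        exact ⟨⟨j, hj, fun j' hne => hj' (Sum.inl j') (by simpa using hne)⟩,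
          funext fun j' => hj' (Sum.inr j') (by simp)⟩
      · right
        exact ⟨funext fun j' => hj' (Sum.inl j') (by simp),
          ⟨j, hj, fun j' hne => hj' (Sum.inr j') (by simpa using hne)⟩⟩
  · refine ⟨fun j => match j with | Sum.inl j => x1 j | Sum.inr j => x2 j, ?_⟩
    change glue ha hb hab (φ1 x1) (φ2 x2) = T
    rw [r1, r2, glue_restrict _ _ _ _ h]

lemma exists_apex {A : Finset ℕ} {T : Finset (ℕ × ℕ)} (h : IsTri A T) {a b x : ℕ}
    (hab : (a, b) ∈ T) (hx : x ∈ A) (hax : a < x) (hxb : x < b) :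
    ∃ c, a < c ∧ c < b ∧ (a, c) ∈ T ∧ (c, b) ∈ T := by
  classical
  have hab' := (h _).1 hab
  simp only at hab'
  have hne : (A.filter fun y => a < y ∧ y < b).Nonempty := ⟨x, by simp [hx, hax, hxb]⟩
  obtain ⟨y, hy, hymin⟩ := Finset.exists_min_image _ id hne
  simp only [Finset.mem_filter, id] at hy hymin
  have hay : (a, y) ∈ T := by
    refine (h _).2 ⟨hab'.1, hy.1, hy.2.1, fun f hf hc => ?_⟩
    have h1 := hab'.2.2.2 f hf
    have hf' := (h f).1 hf
    have k1 := hymin f.1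
    have k2 := hymin f.2
    simp only [hf'.1, hf'.2.1, true_and] at k1 k2
    unfold cr at h1 hc
    simp only at h1 hc
    omega
  have hne' : (A.filter fun y => (a < y ∧ y < b) ∧ (a, y) ∈ T).Nonempty :=
    ⟨y, by simp [hy, hay]⟩
  obtain ⟨c, hc, hcmax⟩ := Finset.exists_max_image _ id hne'
  simp only [Finset.mem_filter, id] at hc hcmax
  refine ⟨c, hc.2.1.1, hc.2.1.2, hc.2.2, ?_⟩
  refine (h _).2 ⟨hc.1, hab'.2.1, hc.2.1.2, fun f hf hcr => ?_⟩
  have h1 := hab'.2.2.2 f hf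
  have h2 := ((h _).1 hc.2.2).2.2.2 f hf
  have hf' := (h f).1 hf
  have k := hcmax f.2
  simp only [hf'.2.1, true_and] at k
  unfold cr at h1 h2 hcr
  simp only at h1 h2 hcr
  have hfa : f.1 = a := by omega
  have : (a, f.2) ∈ T := by rw [← hfa]; exact hf
  have := k ⟨by omega, this⟩
  omega

lemma cycBtw_lt {m : ℕ} {a b : Fin m} (h : a < b) (x : Fin m) :
    CycBtw a b x ↔ a < x ∧ x < b := by
  unfold CycBtw
  have h1 := Fin.sub_def x a
  have h2 := Fin.sub_def b a
  rw [Fin.sub_val_of_le h.le]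
  have hb := b.2
  have hx := x.2
  rw [Fin.lt_def] at h ⊢
  rw [Fin.lt_def]
  by_cases hax : a ≤ x
  · rw [Fin.sub_val_of_le hax]
    rw [Fin.le_def] at hax
    omega
  · rw [not_le] at hax
    rw [Fin.coe_sub_iff_lt.2 hax]
    rw [Fin.lt_def] at hax
    omega

lemma cycBtw_gt {m : ℕ} {a b : Fin m} (h : b < a) (x : Fin m) :
    CycBtw a b x ↔ a < x ∨ x < b := by
  unfold CycBtw
  rw [Fin.coe_sub_iff_lt.2 h]
  have hb := b.2
  have ha := a.2
  have hx := x.2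
  rw [Fin.lt_def] at h ⊢
  rw [Fin.lt_def]
  by_cases hax : a ≤ x
  · rw [Fin.sub_val_of_le hax]
    rw [Fin.le_def] at hax
    omega
  · rw [not_le] at hax
    rw [Fin.coe_sub_iff_lt.2 hax]
    rw [Fin.lt_def] at hax
    omega

lemma crosses_iff {m : ℕ} {i j k l : Fin m} (h : i < j) (h' : k < l) :
    Crosses s(i, j) s(k, l) ↔ (i < k ∧ k < j ∧ j < l) ∨ (k < i ∧ i < l ∧ l < j) := by
  constructor
  · intro hc
    have key : Xor (CycBtw i j k) (CycBtw i j l) := by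
      obtain ⟨c, d, hcd, hx⟩ := hc i j rfl
      rcases Sym2.eq_iff.1 hcd with ⟨rfl, rfl⟩ | ⟨rfl, rfl⟩
      · exact hx
      · exact hx.symm
    have key' : Xor (CycBtw j i k) (CycBtw j i l) := by
      obtain ⟨c, d, hcd, hx⟩ := hc j i Sym2.eq_swap
      rcases Sym2.eq_iff.1 hcd with ⟨rfl, rfl⟩ | ⟨rfl, rfl⟩
      · exact hx
      · exact hx.symm
    rw [cycBtw_lt h, cycBtw_lt h] at key
    rw [cycBtw_gt h, cycBtw_gt h] at key'
    unfold Xor at key key'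
    omega
  · intro hc a b hab
    refine ⟨k, l, rfl, ?_⟩
    rcases Sym2.eq_iff.1 hab with ⟨rfl, rfl⟩ | ⟨rfl, rfl⟩
    · rw [cycBtw_lt h, cycBtw_lt h]
      unfold Xor' Xor
      omega
    · rw [cycBtw_gt h, cycBtw_gt h]
      unfold Xor' Xor
      omega

lemma side_of_not_diagonal {m : ℕ} {i j : Fin m} (h : i < j) (hd : ¬ IsDiagonal s(i, j)) :
    j.val = i.val + 1 ∨ (i.val = 0 ∧ j.val + 1 = m) := by
  unfold IsDiagonal at hd
  simp only [Sym2.mk_isDiag_iff, h.ne, not_false_eq_true, true_and, not_forall, not_not] at hd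
  obtain ⟨a, b, hab, hp⟩ := hd
  have e1 : (j - i).val = j.val - i.val := Fin.sub_val_of_le h.le
  have e2 := Fin.coe_sub_iff_lt.2 h
  have := i.2
  have := j.2
  have h' := Fin.lt_def.1 h
  unfold PolyAdj at hp
  rcases Sym2.eq_iff.1 hab with ⟨rfl, rfl⟩ | ⟨rfl, rfl⟩ <;> omega

lemma diagonal_of_crosses {m : ℕ} {i j k l : Fin m} (h : i < j) (_ : k < l)
    (hc : (i < k ∧ k < j ∧ j < l) ∨ (k < i ∧ i < l ∧ l < j)) : IsDiagonal s(i, j) := by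
  by_contra hd
  have := side_of_not_diagonal h hd
  have := k.2
  have := l.2
  simp only [Fin.lt_def] at *
  omega

lemma not_diagonal_of_eq {m : ℕ} {e : Sym2 (Fin m)} (h : IsDiagonal e) :
    ∃ i j : Fin m, i < j ∧ e = s(i, j) := by
  induction e using Sym2.ind with
  | _ x y =>
    have := h.1
    rw [Sym2.mk_isDiag_iff] at this
    rcases lt_or_gt_of_ne this with h | h
    · exact ⟨x, y, h, rfl⟩
    · exact ⟨y, x, h, Sym2.eq_swap⟩

section link
variable {n : ℕ} (φ : Fin (n + 2) ↪o ℕ)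

open Classical in
noncomputable def toT (t : Finset (Sym2 (Fin (n + 2)))) : Finset (ℕ × ℕ) :=
  ((Finset.univ : Finset (Fin (n + 2) × Fin (n + 2))).filter
    fun p => p.1 < p.2 ∧ (s(p.1, p.2) ∈ t ∨ ¬ IsDiagonal s(p.1, p.2))).image
      fun p => (φ p.1, φ p.2)

lemma mem_toT (t : Finset (Sym2 (Fin (n + 2)))) (e : ℕ × ℕ) :
    e ∈ toT φ t ↔ ∃ i j, i < j ∧ (s(i, j) ∈ t ∨ ¬ IsDiagonal s(i, j)) ∧ e = (φ i, φ j) := by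
  unfold toT
  simp only [Finset.mem_image, Finset.mem_filter, Finset.mem_univ, true_and, Prod.exists]
  constructor
  · rintro ⟨i, j, ⟨h1, h2⟩, rfl⟩
    exact ⟨i, j, h1, h2, rfl⟩
  · rintro ⟨i, j, h1, h2, rfl⟩
    exact ⟨i, j, ⟨h1, h2⟩, rfl⟩

lemma mk_mem_toT (t : Finset (Sym2 (Fin (n + 2)))) {i j : Fin (n + 2)} (h : i < j) :
    (φ i, φ j) ∈ toT φ t ↔ s(i, j) ∈ t ∨ ¬ IsDiagonal s(i, j) := by
  rw [mem_toT]
  constructor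
  · rintro ⟨k, l, h1, h2, he⟩
    rw [Prod.mk.injEq, φ.injective.eq_iff, φ.injective.eq_iff] at he
    rw [he.1, he.2]; exact h2
  · intro h2
    exact ⟨i, j, h, h2, rfl⟩

lemma cr_iff (i j k l : Fin (n + 2)) : cr (φ i, φ j) (φ k, φ l) ↔
    (i < k ∧ k < j ∧ j < l) ∨ (k < i ∧ i < l ∧ l < j) := by
  simp [cr]

lemma isTri_toT {A : Finset ℕ} (hA : ∀ x, x ∈ A ↔ ∃ i, φ i = x)
    {t : Finset (Sym2 (Fin (n + 2)))} (ht : IsTriangulation n t) : IsTri A (toT φ t) := by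
  rintro ⟨u, v⟩
  constructor
  · intro he
    obtain ⟨i, j, hij, h, he⟩ := (mem_toT _ _ _).1 he
    rw [Prod.mk.injEq] at he
    obtain ⟨rfl, rfl⟩ := he
    refine ⟨(hA _).2 ⟨_, rfl⟩, (hA _).2 ⟨_, rfl⟩, φ.strictMono hij, fun f hf hc => ?_⟩
    obtain ⟨k, l, hkl, h', rfl⟩ := (mem_toT _ _ _).1 hf
    rw [cr_iff] at hc
    have d1 := diagonal_of_crosses hij hkl hc
    have d2 := diagonal_of_crosses hkl hij (by tauto)
    simp only [d1, d2, not_true_eq_false, or_false] at h h'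
    exact ht.2.1 _ h _ h' ((crosses_iff hij hkl).2 hc)
  · rintro ⟨h1, h2, h3, h4⟩
    obtain ⟨i, rfl⟩ := (hA _).1 h1
    obtain ⟨j, rfl⟩ := (hA _).1 h2
    have hij : i < j := φ.lt_iff_lt.1 h3
    rw [mk_mem_toT _ _ hij, or_iff_not_imp_right, not_not]
    intro hd
    refine ht.2.2 _ hd fun f hf hc => ?_
    obtain ⟨k, l, hkl, rfl⟩ := not_diagonal_of_eq (ht.1 _ hf)
    rw [crosses_iff hij hkl] at hc
    exact h4 (φ k, φ l) ((mk_mem_toT _ _ hkl).2 (Or.inl hf)) ((cr_iff _ _ _ _ _).2 hc)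

lemma toT_card {s t : Finset (Sym2 (Fin (n + 2)))} (hs : ∀ e ∈ s, IsDiagonal e) :
    (toT φ s \ toT φ t).card = (s \ t).card := by
  symm
  classical
  have hinj : Function.Injective fun e : Sym2 (Fin (n + 2)) => (φ e.inf, φ e.sup) := by
    intro e f h
    simp only [Prod.mk.injEq, φ.injective.eq_iff] at h
    exact Sym2.inf_eq_inf_and_sup_eq_sup.1 h
  rw [← Finset.card_image_of_injective _ hinj]
  congr 1
  ext p
  simp only [Finset.mem_image, Finset.mem_sdiff]
  constructor
  · rintro ⟨e, ⟨h1, h2⟩, rfl⟩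
    obtain ⟨i, j, hij, rfl⟩ := not_diagonal_of_eq (hs _ h1)
    have hd := hs _ h1
    simp only [Sym2.inf_mk, Sym2.sup_mk, inf_eq_left.2 hij.le, sup_eq_right.2 hij.le,
      mk_mem_toT φ _ hij]
    tauto
  · rintro ⟨h1, h2⟩
    obtain ⟨i, j, hij, h, rfl⟩ := (mem_toT _ _ _).1 h1
    rw [mk_mem_toT φ _ hij] at h2
    refine ⟨s(i, j), by tauto, ?_⟩
    simp only [Sym2.inf_mk, Sym2.sup_mk, inf_eq_left.2 hij.le, sup_eq_right.2 hij.le]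

lemma exists_toT {A : Finset ℕ} (hA : ∀ x, x ∈ A ↔ ∃ i, φ i = x)
    {T : Finset (ℕ × ℕ)} (hT : IsTri A T) :
    ∃ t, IsTriangulation n t ∧ toT φ t = T := by
  classical
  have hmem : ∀ i j : Fin (n + 2), i < j → (s(i, j) ∈ Finset.univ.filter
      (fun e : Sym2 (Fin (n + 2)) => IsDiagonal e ∧ (φ e.inf, φ e.sup) ∈ T) ↔
        IsDiagonal s(i, j) ∧ (φ i, φ j) ∈ T) := by
    intro i j hij
    simp only [Finset.mem_filter, Finset.mem_univ, true_and, Sym2.inf_mk, Sym2.sup_mk,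
      inf_eq_left.2 hij.le, sup_eq_right.2 hij.le]
  have hT' : ∀ f ∈ T, ∃ k l, k < l ∧ f = (φ k, φ l) := by
    rintro ⟨u, v⟩ hf
    obtain ⟨h1, h2, h3, -⟩ := (hT _).1 hf
    obtain ⟨k, rfl⟩ := (hA _).1 h1
    obtain ⟨l, rfl⟩ := (hA _).1 h2
    exact ⟨k, l, φ.lt_iff_lt.1 h3, rfl⟩
  have hside : ∀ i j, i < j → ¬ IsDiagonal s(i, j) → (φ i, φ j) ∈ T := by
    intro i j hij hd
    refine (hT _).2 ⟨(hA _).2 ⟨_, rfl⟩, (hA _).2 ⟨_, rfl⟩, φ.strictMono hij, fun f hf hc => ?_⟩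
    obtain ⟨k, l, hkl, rfl⟩ := hT' f hf
    rw [cr_iff] at hc
    exact hd (diagonal_of_crosses hij hkl hc)
  refine ⟨Finset.univ.filter
      (fun e : Sym2 (Fin (n + 2)) => IsDiagonal e ∧ (φ e.inf, φ e.sup) ∈ T),
      ⟨?_, ?_, ?_⟩, ?_⟩
  · intro e he
    simp only [Finset.mem_filter] at he
    exact he.2.1
  · intro e he f hf hc
    obtain ⟨i, j, hij, rfl⟩ := not_diagonal_of_eq (Finset.mem_filter.1 he).2.1
    obtain ⟨k, l, hkl, rfl⟩ := not_diagonal_of_eq (Finset.mem_filter.1 hf).2.1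
    rw [hmem _ _ hij] at he
    rw [hmem _ _ hkl] at hf
    rw [crosses_iff hij hkl] at hc
    exact ((hT _).1 he.2).2.2.2 _ hf.2 ((cr_iff _ _ _ _ _).2 hc)
  · intro e he hf
    obtain ⟨i, j, hij, rfl⟩ := not_diagonal_of_eq he
    rw [hmem _ _ hij]
    refine ⟨he, (hT _).2 ⟨(hA _).2 ⟨_, rfl⟩, (hA _).2 ⟨_, rfl⟩, φ.strictMono hij,
      fun f hfT hc => ?_⟩⟩
    obtain ⟨k, l, hkl, rfl⟩ := hT' f hfT
    rw [cr_iff] at hc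
    refine hf s(k, l) ((hmem _ _ hkl).2 ⟨diagonal_of_crosses hkl hij (by tauto), hfT⟩) ?_
    exact (crosses_iff hij hkl).2 hc
  · ext e
    rw [mem_toT]
    constructor
    · rintro ⟨i, j, hij, h, rfl⟩
      rw [hmem _ _ hij] at h
      by_cases hd : IsDiagonal s(i, j)
      · tauto
      · exact hside _ _ hij hd
    · intro he
      obtain ⟨i, j, hij, rfl⟩ := hT' e he
      refine ⟨i, j, hij, ?_, rfl⟩
      rw [hmem _ _ hij]
      tauto

end link

lemma exists_iso {A : Finset ℕ} {n : ℕ} (h : A.card = n + 2) :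
    Nonempty (assocGraph n ≃g gr A) := by
  let φ := A.orderEmbOfFin h
  have hA : ∀ x, x ∈ A ↔ ∃ i, φ i = x := by
    intro x
    have := A.range_orderEmbOfFin h
    rw [← Finset.mem_coe, ← this]
    rfl
  let F : Triangulation n → Tri A := fun t => ⟨toT φ t.1, isTri_toT φ hA t.2⟩
  have hF : ∀ s t : Triangulation n, ((F s).1 \ (F t).1).card = (s.1 \ t.1).card :=
    fun s t => toT_card φ s.2.1
  have hinj : Function.Injective F := by
    intro s t hst
    have h1 := hF s t
    have h2 := hF t s
    rw [hst] at h1 h2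
    simp only [Finset.sdiff_self, Finset.card_empty] at h1 h2
    apply Subtype.ext
    apply Finset.Subset.antisymm
    · simpa using h1.symm
    · simpa using h2.symm
  have hsurj : Function.Surjective F := by
    rintro ⟨T, hT⟩
    obtain ⟨t, ht, rfl⟩ := exists_toT φ hA hT
    exact ⟨⟨t, ht⟩, rfl⟩
  refine ⟨⟨Equiv.ofBijective F ⟨hinj, hsurj⟩, ?_⟩⟩
  intro s t
  change ((F s).1 \ (F t).1).card = 1 ∧ ((F t).1 \ (F s).1).card = 1 ↔ _
  rw [hF, hF]
  rfl

/-- number of vertices strictly inside the chord `(a,b)`. -/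
def wd (A : Finset ℕ) (a b : ℕ) : ℕ := (A.filter fun x => a < x ∧ x < b).card

lemma card_outer (A : Finset ℕ) (a b : ℕ) :
    (A.filter fun x => ¬ (a < x ∧ x < b)).card + wd A a b = A.card := by
  have := Finset.card_filter_add_card_filter_not (s := A) (fun x => a < x ∧ x < b)
  unfold wd
  omega

lemma card_inner {A : Finset ℕ} {a b : ℕ} (ha : a ∈ A) (hb : b ∈ A) (hab : a < b) :
    (A.filter fun x => a ≤ x ∧ x ≤ b).card = wd A a b + 2 := by
  have : (A.filter fun x => a ≤ x ∧ x ≤ b) =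
      insert a (insert b (A.filter fun x => a < x ∧ x < b)) := by
    ext x
    simp only [Finset.mem_filter, Finset.mem_insert]
    constructor
    · rintro ⟨h, h1, h2⟩
      by_cases x = a
      · tauto
      · by_cases x = b
        · tauto
        · exact Or.inr (Or.inr ⟨h, by omega⟩)
    · rintro (rfl | rfl | ⟨h, h1, h2⟩)
      · exact ⟨ha, by omega⟩
      · exact ⟨hb, by omega⟩
      · exact ⟨h, by omega⟩
  rw [this, Finset.card_insert_of_notMem, Finset.card_insert_of_notMem]
  · rfl
  · simp
  · simp; omega

lemma wd_inner (A : Finset ℕ) {a b p q : ℕ} (h1 : a ≤ p) (h2 : q ≤ b) :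
    wd (A.filter fun x => a ≤ x ∧ x ≤ b) p q = wd A p q := by
  unfold wd
  congr 1
  ext x
  simp only [Finset.mem_filter, and_assoc]
  constructor
  · tauto
  · rintro ⟨h, h3, h4⟩
    exact ⟨h, by omega, by omega, h3, h4⟩

lemma wd_outer (A : Finset ℕ) {a b p q : ℕ} (h1 : b ≤ p) :
    wd (A.filter fun x => ¬ (a < x ∧ x < b)) p q = wd A p q := by
  unfold wd
  congr 1
  ext x
  simp only [Finset.mem_filter, and_assoc]
  constructor
  · tauto
  · rintro ⟨h, h3, h4⟩
    exact ⟨h, by omega, h3, h4⟩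

lemma wd_add {A : Finset ℕ} {a b c : ℕ} (hc : c ∈ A) (h1 : a < c) (h2 : c < b) :
    wd A a b = wd A a c + wd A c b + 1 := by
  unfold wd
  have : (A.filter fun x => a < x ∧ x < b) =
      insert c ((A.filter fun x => a < x ∧ x < c) ∪ (A.filter fun x => c < x ∧ x < b)) := by
    ext x
    simp only [Finset.mem_filter, Finset.mem_insert, Finset.mem_union]
    constructor
    · rintro ⟨h, h1, h2⟩
      rcases lt_trichotomy x c with h' | h' | h'
      · exact Or.inr (Or.inl ⟨h, by omega⟩)
      · exact Or.inl h'
      · exact Or.inr (Or.inr ⟨h, by omega⟩)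
    · rintro (rfl | ⟨h, h1, h2⟩ | ⟨h, h1, h2⟩)
      · exact ⟨hc, by omega⟩
      · exact ⟨h, by omega⟩
      · exact ⟨h, by omega⟩
  rw [this, Finset.card_insert_of_notMem, Finset.card_union_of_disjoint]
  · rw [Finset.disjoint_left]
    intro x
    simp only [Finset.mem_filter]
    omega
  · simp

lemma Claim.base {A : Finset ℕ} (T : Tri A) {s : ℕ} (hs : A.card = s + 2) {P : ℕ → Prop}
    (hP : P s) : Claim A T 1 P := by
  obtain ⟨f⟩ := exists_iso hs
  refine ⟨Unit, inferInstance, by simp, fun _ => s, fun _ => hP, ⟨⟨fun x => f (x ()), ?_⟩, ?_⟩, ?_⟩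
  · intro x y h
    funext j
    exact f.injective h
  · intro x y
    change (gr A).Adj (f (x ())) (f (y ())) ↔ _
    rw [f.map_adj_iff]
    constructor
    · intro h
      exact ⟨(), h, fun j hj => absurd rfl hj⟩
    · rintro ⟨j, h, -⟩
      exact h
  · exact ⟨fun _ => f.symm T, f.apply_symm_apply T⟩

lemma Claim.congr {A A' : Finset ℕ} {T : Tri A} {T' : Tri A'} {l : ℕ} {P : ℕ → Prop}
    (h : Claim A T l P) (hA : A = A') (hT : T.1 = T'.1) : Claim A' T' l P := by
  subst hA
  rw [Subtype.ext hT] at h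
  exact h

lemma exists_ends {A : Finset ℕ} {T : Finset (ℕ × ℕ)} (hT : IsTri A T) (h : 2 ≤ A.card) :
    ∃ a b, (a, b) ∈ T ∧ ∀ x ∈ A, a ≤ x ∧ x ≤ b := by
  have hne : A.Nonempty := Finset.card_pos.1 (by omega)
  have hb : ∀ x ∈ A, A.min' hne ≤ x ∧ x ≤ A.max' hne :=
    fun x hx => ⟨A.min'_le x hx, A.le_max' x hx⟩
  refine ⟨A.min' hne, A.max' hne, ?_, hb⟩
  refine (hT _).2 ⟨A.min'_mem hne, A.max'_mem hne, A.min'_lt_max'_of_card h, fun f hf => ?_⟩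
  have hf' := (hT _).1 hf
  have h1 := hb _ hf'.1
  have h2 := hb _ hf'.2.1
  unfold cr
  simp only
  omega

lemma Claim.pad_one {A : Finset ℕ} {T : Tri A} {l : ℕ} {P : ℕ → Prop} (h : Claim A T l P)
    (hA : 2 ≤ A.card) (hP : P 0) : Claim A T (l + 1) P := by
  obtain ⟨a, b, hab, hall⟩ := exists_ends T.2 hA
  obtain ⟨ha, hb, hlt, -⟩ := (T.2 _).1 hab
  have e : (A.filter fun x => a ≤ x ∧ x ≤ b) = A := Finset.filter_true_of_mem hall
  refine Claim.combine hab (h.congr e.symm ?_) (Claim.base _ ?_ hP)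
  · symm
    apply Finset.filter_true_of_mem
    intro f hf
    have hf' := (T.2 _).1 hf
    exact ⟨(hall _ hf'.1).1, (hall _ hf'.2.1).2⟩
  · have h1 := card_outer A a b
    have h2 := card_inner ha hb hlt
    rw [e] at h2
    simp only at h2
    omega

lemma Claim.pad {A : Finset ℕ} {T : Tri A} {l l' : ℕ} {P : ℕ → Prop} (h : Claim A T l P)
    (hl : l ≤ l') (hA : 2 ≤ A.card) (hP : P 0) : Claim A T l' P := by
  induction l', hl using Nat.le_induction with
  | base => exact h
  | succ m _ ih => exact ih.pad_one hA hP

lemma exists_centroid {A : Finset ℕ} {T : Finset (ℕ × ℕ)} (hT : IsTri A T) {s : ℕ}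
    (hs : A.card = s + 2) (h2 : 2 ≤ s) :
    ∃ a c b, a < c ∧ c < b ∧ (a, b) ∈ T ∧ (a, c) ∈ T ∧ (c, b) ∈ T ∧
      s < 2 * wd A a b ∧ 2 * wd A a c ≤ s ∧ 2 * wd A c b ≤ s := by
  obtain ⟨a0, b0, h0, hall⟩ := exists_ends hT (by omega)
  have hw0 : wd A a0 b0 = s := by
    obtain ⟨ha, hb, hlt, -⟩ := (hT _).1 h0
    have := card_inner ha hb hlt
    rw [Finset.filter_true_of_mem hall] at this
    simp only at this
    omega
  have hne : (T.filter fun e => s < 2 * wd A e.1 e.2).Nonempty :=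
    ⟨(a0, b0), by simp only [Finset.mem_filter]; exact ⟨h0, by omega⟩⟩
  obtain ⟨⟨a, b⟩, he, hmin⟩ := Finset.exists_min_image _ (fun e => wd A e.1 e.2) hne
  simp only [Finset.mem_filter] at he hmin
  have hpos : 0 < wd A a b := by omega
  obtain ⟨x, hx⟩ := Finset.card_pos.1 hpos
  simp only [Finset.mem_filter] at hx
  obtain ⟨c, h1, h2, h3, h4⟩ := exists_apex hT he.1 hx.1 hx.2.1 hx.2.2
  have hadd := wd_add ((hT _).1 h3).2.1 h1 h2
  simp only at hadd
  refine ⟨a, c, b, h1, h2, he.1, h3, h4, he.2, ?_, ?_⟩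
  · by_contra hcon
    have := hmin (a, c) ⟨h3, by simp only; omega⟩
    simp only at this
    omega
  · by_contra hcon
    have := hmin (c, b) ⟨h4, by simp only; omega⟩
    simp only at this
    omega

theorem main {M N : ℕ} (hMN : M ≤ N) (j : ℕ) : ∀ (A : Finset ℕ) (T : Tri A) (s : ℕ),
    A.card = s + 2 → s * M ≤ N * 2 ^ j → Claim A T (3 ^ j) (fun i => i * M ≤ N) := by
  induction j with
  | zero =>
    intro A T s hs h
    exact Claim.base T hs (by simpa using h)
  | succ j ih =>
    intro A T s hs h
    by_cases h2 : s ≤ 1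
    · refine Claim.pad (l := 1) (Claim.base T hs ?_) (Nat.one_le_pow _ _ (by norm_num))
        (by omega) (by simp)
      calc s * M ≤ 1 * M := Nat.mul_le_mul_right _ h2
        _ ≤ N := by omega
    · have ih' : ∀ (A : Finset ℕ) (T : Tri A) (r : ℕ), A.card = r + 2 → 2 * r ≤ s →
          Claim A T (3 ^ j) (fun i => i * M ≤ N) := by
        intro A T r hr hrs
        refine ih A T r hr ?_
        have h3 : 2 * r * M ≤ s * M := Nat.mul_le_mul_right _ hrs
        rw [pow_succ] at h
        nlinarith
      obtain ⟨a, c, b, hac, hcb, mab, mac, mcb, k1, k2, k3⟩ :=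
        exists_centroid T.2 hs (by omega)
      obtain ⟨ha, hc, -, -⟩ := (T.2 _).1 mac
      have hb := ((T.2 _).1 mab).2.1
      simp only at ha hb hc
      have hadd := wd_add hc hac hcb
      have hle := card_outer A a b
      have hz : 2 ≤ (A.filter fun x => ¬ (a < x ∧ x < b)).card := by
        have : ({a, b} : Finset ℕ) ⊆ A.filter fun x => ¬ (a < x ∧ x < b) := by
          intro x hx
          simp only [Finset.mem_insert, Finset.mem_singleton] at hx
          rcases hx with rfl | rfl
          · simp [ha]
          · simp [hb]
        have := Finset.card_le_card this
        rwa [Finset.card_pair (by omega)] at this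
      have e3 : 3 ^ (j + 1) = 3 ^ j + (3 ^ j + 3 ^ j) := by rw [pow_succ]; ring
      have e3' : 3 ^ (j + 1) = (3 ^ j + 3 ^ j) + 3 ^ j := by rw [pow_succ]; ring
      by_cases c1 : 2 * (wd A a c + 1) ≤ s
      · -- merge the triangle with the piece `[a,c]`
        have mcb' : (c, b) ∈ T.1.filter fun e => a ≤ e.1 ∧ e.2 ≤ b := by
          simp only [Finset.mem_filter]; exact ⟨mcb, by omega, le_rfl⟩
        have i1 := card_inner ha hb (hac.trans hcb)
        have w1 := wd_inner A hac.le (le_refl b)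
        have i2 := card_inner (A := A.filter fun x => a ≤ x ∧ x ≤ b) (a := c) (b := b)
          (by simp only [Finset.mem_filter]; exact ⟨hc, by omega⟩)
          (by simp only [Finset.mem_filter]; exact ⟨hb, by omega⟩) hcb
        have o2 := card_outer (A.filter fun x => a ≤ x ∧ x ≤ b) c b
        rw [e3']
        refine Claim.combine mab (Claim.combine (T := ⟨_, T.2.inner mab⟩) mcb'
          (ih' _ _ (wd A c b) ?_ ?_) (ih' _ _ (wd A a c + 1) ?_ ?_))
          (ih' _ _ (s - wd A a b) ?_ ?_) <;> omega
      · by_cases c2 : 2 * (wd A c b + 1) ≤ s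
        · have mac' : (a, c) ∈ T.1.filter fun e => a ≤ e.1 ∧ e.2 ≤ b := by
            simp only [Finset.mem_filter]; exact ⟨mac, by omega, by omega⟩
          have i1 := card_inner ha hb (hac.trans hcb)
          have w1 := wd_inner A (le_refl a) hcb.le
          have i2 := card_inner (A := A.filter fun x => a ≤ x ∧ x ≤ b) (a := a) (b := c)
            (by simp only [Finset.mem_filter]; exact ⟨ha, by omega⟩)
            (by simp only [Finset.mem_filter]; exact ⟨hc, by omega⟩) hac
          have o2 := card_outer (A.filter fun x => a ≤ x ∧ x ≤ b) a c
          rw [e3']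
          refine Claim.combine mab (Claim.combine (T := ⟨_, T.2.inner mab⟩) mac'
            (ih' _ _ (wd A a c) ?_ ?_) (ih' _ _ (wd A c b + 1) ?_ ?_))
            (ih' _ _ (s - wd A a b) ?_ ?_) <;> omega
        · have mcb' : (c, b) ∈ T.1.filter
              fun e => ¬ (a < e.1 ∧ e.1 < c) ∧ ¬ (a < e.2 ∧ e.2 < c) := by
            simp only [Finset.mem_filter]; exact ⟨mcb, by omega, by omega⟩
          have i1 := card_inner ha hc hac
          have w1 := wd_outer A (a := a) (q := b) (le_refl c)
          have o1 := card_outer A a c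
          have i2 := card_inner (A := A.filter fun x => ¬ (a < x ∧ x < c)) (a := c) (b := b)
            (by simp only [Finset.mem_filter]; exact ⟨hc, by omega⟩)
            (by simp only [Finset.mem_filter]; exact ⟨hb, by omega⟩) hcb
          have o2 := card_outer (A.filter fun x => ¬ (a < x ∧ x < c)) c b
          rw [e3]
          refine Claim.combine mac (ih' _ _ (wd A a c) ?_ ?_)
            (Claim.combine (T := ⟨_, T.2.outer mac⟩) mcb'
            (ih' _ _ (wd A c b) ?_ ?_) (ih' _ _ (s - wd A a b + 1) ?_ ?_)) <;> omega

lemma final (n k : ℕ) (hk : 1 ≤ k) (hkn : k ≤ n) (t : Triangulation n) :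
    ∃ S : Set (Triangulation n), t ∈ S ∧
      ∃ i : Fin k → ℕ, (∀ j : Fin k, i j * 2 ^ (Nat.log 3 k) ≤ n) ∧
        Nonempty (((assocGraph n).induce S) ≃g piBoxProd (fun j => assocGraph (i j))) := by
  have h3 : 3 ^ Nat.log 3 k ≤ k := Nat.pow_log_le_self 3 (by omega)
  have h2 : 2 ^ Nat.log 3 k ≤ 3 ^ Nat.log 3 k := Nat.pow_le_pow_left (by norm_num) _
  have hcard : (Finset.range (n + 2)).card = n + 2 := by simp
  obtain ⟨f⟩ := exists_iso hcard
  have hc := main (M := 2 ^ Nat.log 3 k) (N := n) (by omega) (Nat.log 3 k) _ (f t) n hcard le_rfl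
  obtain ⟨ι, _, hι, i, hi, φ, x, hx⟩ := hc.pad h3 (by omega) (by simp)
  let e : ι ≃ Fin k := Fintype.equivFinOfCardEq hι
  let ψ : piBoxProd (fun j => assocGraph (i j)) ↪g assocGraph n := f.symm.toEmbedding.comp φ
  refine ⟨Set.range ψ, ⟨x, ?_⟩, fun j => i (e.symm j), fun j => hi _, ⟨?_⟩⟩
  · change f.symm (φ x) = t
    rw [hx, f.symm_apply_apply]
  let g1 : piBoxProd (fun j => assocGraph (i j)) ≃g (assocGraph n).induce (Set.range ψ) :=
    ⟨Equiv.ofInjective ψ ψ.injective, by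
      intro x y
      exact ψ.map_adj_iff⟩
  let g2 : piBoxProd (fun j => assocGraph (i j)) ≃g
      piBoxProd (fun j => assocGraph (i (e.symm j))) :=
    ⟨Equiv.piCongrLeft' (fun j => Triangulation (i j)) e, by
      intro x y
      constructor
      · rintro ⟨j, h, h'⟩
        refine ⟨e.symm j, h, fun l hl => ?_⟩
        have := h' (e l) (fun hh => hl (by rw [← hh, e.symm_apply_apply]))
        obtain ⟨l, rfl⟩ := e.symm.surjective l
        rw [e.apply_symm_apply] at this
        exact this
      · rintro ⟨j, h, h'⟩
        obtain ⟨j, rfl⟩ := e.symm.surjective j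
        exact ⟨j, h, fun l hl => h' (e.symm l) (fun hh => hl (e.symm.injective hh))⟩⟩
  exact g1.symm.trans g2

end AssocAux

/-- for every `n ≥ 1`, every `1 ≤ k ≤ n` and every triangulation `t` of
the convex `(n+2)`-gon, there are a set `S ∋ t` of triangulations and naturals
`i_1, …, i_k` with each `i_j ≤ n / 2^{⌊log_3 k⌋}` such that the subgraph of `K_n`
induced by `S` is isomorphic to the Cartesian product `K_{i_1} □ K_{i_2} □ ⋯ □ K_{i_k}`. -/
theorem triangulation_mem_boxProd_class (n k : ℕ) (hn : 1 ≤ n) (hk : 1 ≤ k)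
    (hkn : k ≤ n) (t : Triangulation n) :
    ∃ S : Set (Triangulation n), t ∈ S ∧
      ∃ i : Fin k → ℕ,
        (∀ j : Fin k, (i j : ℝ) ≤ (n : ℝ) / 2 ^ (Nat.log 3 k)) ∧
        Nonempty (((assocGraph n).induce S) ≃g piBoxProd (fun j => assocGraph (i j))) := by
  obtain ⟨S, hS, i, hi, hiso⟩ := AssocAux.final n k hk hkn t
  refine ⟨S, hS, i, fun j => ?_, hiso⟩
  rw [le_div_iff₀ (by positivity)]
  exact_mod_cast hi j
end
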